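/- arXiv:math/0701265 — 2 statements merged into one kernel-verified Lean document; each statement's English description precedes it below -/
import Mathlib

section
/- There exist a real number τ with |τ - 1.570796| ≤ 0.000001 and a 2π-periodic C¹ function x : ℝ → ℝ satisfying x'(t) = -(1.6/τ)·sin(x(t-τ)) for all t ∈ ℝ, whose first Fourier coefficient c₁ = (1/2π)∫₀^{2π} x(t) e^{-it} dt satisfies |c₁ - (-0.1521 - 0.1163508047·i)| ≤ 0.0000002438; in particular x is nonconstant. -/
open scoped Real
open Complex Filter

/-- Convolution of two two-sided sequences of complex numbers. -/
noncomputable def conv (x y : ℤ → ℂ) : ℤ → ℂ := fun n => ∑' k : ℤ, x k * y (n - k)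

/-- `convPow x k` is the `k`-fold convolution power `x^{*k}`;
`x^{*0}` is the unit (Kronecker delta at `0`). -/
noncomputable def convPow (x : ℤ → ℂ) : ℕ → ℤ → ℂ
  | 0 => fun n => if n = 0 then 1 else 0
  | k + 1 => conv (convPow x k) x

/-- Membership in `X_β`: decay `|x_n| ≤ β/(|n|+1)^2` and the symmetry `x_{-n} = conj x_n`. -/
def memX (β : ℝ) (x : ℤ → ℂ) : Prop :=
  (∀ n : ℤ, ‖x n‖ ≤ β / (|(n : ℝ)| + 1) ^ 2) ∧ (∀ n : ℤ, x (-n) = starRingEnd ℂ (x n))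

/-!
Following Kaplan and Yorke, we look for a solution whose period is four times the delay, so that
`τ = π / 2`. Let `A = arcsin (k sn)` be the angle attached to a Jacobi elliptic function of period
`2π`. Differentiating Fourier series and evaluating their convolutions by telescoping sums of `tanh`
and `coth` gives the elliptic differential equations, hence `dn ± i k sn = exp (± i A)` up to the
factor `dnMax`. Together with the quarter-period shift identities this shows that
`x t = A t + A (t + π / 2)` satisfies `x' t = -dnMax * sin (x (t - π / 2))`.

The modulus is encoded by a parameter `h > 0`, and both quantities to be matched are explicit in it:
`dnMax` is the sum of `sech (2 n h)` over the integers, and the first Fourier coefficient of `x` has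
modulus `√2 * sech h`. The intermediate value theorem gives an `h` with `dnMax = 1.6 / τ = 3.2 / π`
and `cosh h ≈ 7.38496`, and a translation in time adjusts the argument of the coefficient.
-/

open scoped Topology ComplexConjugate

section Telescoping

variable {E : Type*} [AddCommGroup E] [TopologicalSpace E] [IsTopologicalAddGroup E] [T2Space E]
  {f : ℤ → E} {a b : E}

lemma hasSum_succ_sub (hf : Summable fun i ↦ f (i + 1) - f i) (ha : Tendsto f atTop (𝓝 a))
    (hb : Tendsto f atBot (𝓝 b)) : HasSum (fun i ↦ f (i + 1) - f i) (a - b) := by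
  have hcast : Tendsto (fun N : ℕ ↦ (N : ℤ)) atTop atTop := tendsto_natCast_atTop_atTop
  have partialSum (N : ℕ) :
      ∑ i ∈ Finset.Ico (-(N : ℤ)) N, (f (i + 1) - f i) = f N - f (-N) := by
    simpa [neg_add_eq_sub] using Finset.sum_Ico_int_sub N (-f)
  have hsum : Tendsto (fun N : ℕ ↦ f N - f (-N)) atTop (𝓝 (∑' i, (f (i + 1) - f i))) := by
    simpa only [partialSum, Function.comp_def] using
      hf.hasSum.comp (Finset.tendsto_Ico_neg_atTop_atTop.comp hcast)
  have hlim : Tendsto (fun N : ℕ ↦ f N - f (-N)) atTop (𝓝 (a - b)) :=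
    (ha.comp hcast).sub (hb.comp (tendsto_neg_atTop_atBot.comp hcast))
  exact tendsto_nhds_unique hsum hlim ▸ hf.hasSum

lemma hasSum_add_sub (hf : Summable fun i ↦ f (i + 1) - f i) (ha : Tendsto f atTop (𝓝 a))
    (hb : Tendsto f atBot (𝓝 b)) (m : ℤ) :
    HasSum (fun i ↦ f (i + m) - f i) (m • (a - b)) := by
  have step (k : ℤ) : HasSum (fun i ↦ f (i + k + 1) - f (i + k)) (a - b) :=
    (Equiv.addRight k).hasSum_iff.2 (hasSum_succ_sub hf ha hb)
  induction m using Int.induction_on with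
  | zero => simp [hasSum_zero]
  | succ k ih =>
    simpa only [add_assoc, sub_add_sub_cancel', add_zsmul, one_zsmul] using ih.add (step k)
  | pred k ih =>
    simpa only [add_assoc, sub_add_cancel, sub_sub_sub_cancel_left, sub_zsmul, one_zsmul,
      ← sub_eq_add_neg (_ • _)] using ih.sub (step (-k - 1))

end Telescoping

/-- The hyperbolic secant. -/
noncomputable def sech (x : ℝ) : ℝ := (Real.cosh x)⁻¹

/-- The hyperbolic cosecant, with the junk value `csch 0 = 0`. -/
noncomputable def csch (x : ℝ) : ℝ := (Real.sinh x)⁻¹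

section Hyperbolic

lemma sech_pos (x : ℝ) : 0 < sech x := inv_pos.2 (Real.cosh_pos x)

lemma sech_le_one (x : ℝ) : sech x ≤ 1 := inv_le_one_of_one_le₀ (Real.one_le_cosh x)

lemma abs_sech (x : ℝ) : |sech x| = sech x := abs_of_pos (sech_pos x)

lemma sech_neg (x : ℝ) : sech (-x) = sech x := by simp [sech]

lemma csch_neg (x : ℝ) : csch (-x) = -csch x := by simp [csch, inv_neg]

lemma sech_le_sech {x y : ℝ} (h : |x| ≤ |y|) : sech y ≤ sech x :=
  inv_anti₀ (Real.cosh_pos x) (Real.cosh_le_cosh.2 h)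

lemma csch_lt_csch {x y : ℝ} (hx : 0 < x) (hxy : x < y) : csch y < csch x :=
  inv_strictAnti₀ (Real.sinh_pos_iff.2 hx) (Real.sinh_lt_sinh.2 hxy)

lemma continuous_sech : Continuous sech :=
  Real.continuous_cosh.inv₀ fun x ↦ (Real.cosh_pos x).ne'

lemma sech_le_two_mul_exp (x : ℝ) : sech x ≤ 2 * Real.exp (-|x|) := by
  have hle : Real.exp |x| / 2 ≤ Real.cosh x := by
    rw [← Real.cosh_abs, Real.cosh_eq]
    linarith [Real.exp_pos (-|x|)]
  calc sech x ≤ (Real.exp |x| / 2)⁻¹ := inv_anti₀ (by positivity) hle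
    _ = 2 * Real.exp (-|x|) := by rw [inv_div, Real.exp_neg, div_eq_mul_inv]

lemma abs_csch_le_inv_tanh_mul_sech {h x : ℝ} (hh : 0 < h) (hx : h ≤ |x|) :
    |csch x| ≤ (Real.tanh h)⁻¹ * sech x := by
  have hsinh_h : 0 < Real.sinh h := Real.sinh_pos_iff.2 hh
  have hsinh_x : 0 < Real.sinh |x| := Real.sinh_pos_iff.2 (hh.trans_le hx)
  have hsub : 0 ≤ Real.sinh (|x| - h) := Real.sinh_nonneg_iff.2 (sub_nonneg.2 hx)
  rw [Real.sinh_sub] at hsub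
  rw [csch, sech, abs_inv, Real.abs_sinh, ← Real.cosh_abs x, Real.tanh_eq_sinh_div_cosh, inv_div,
    ← div_eq_mul_inv, div_div, inv_eq_one_div,
    div_le_div_iff₀ hsinh_x (mul_pos hsinh_h (Real.cosh_pos _))]
  linarith

lemma sech_add_le_mul {x y : ℝ} (hx : 0 ≤ x) (hy : 0 ≤ y) : sech (x + y) ≤ sech x * sech y := by
  rw [sech, sech, sech, ← mul_inv, Real.cosh_add]
  refine inv_anti₀ (mul_pos (Real.cosh_pos x) (Real.cosh_pos y)) (le_add_of_nonneg_right ?_)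
  exact mul_nonneg (Real.sinh_nonneg_iff.2 hx) (Real.sinh_nonneg_iff.2 hy)

lemma tanh_add_tanh (x y : ℝ) :
    Real.tanh x + Real.tanh y = Real.sinh (x + y) * (sech x * sech y) := by
  have hx := (Real.cosh_pos x).ne'
  have hy := (Real.cosh_pos y).ne'
  rw [sech, sech, Real.tanh_eq_sinh_div_cosh, Real.tanh_eq_sinh_div_cosh, Real.sinh_add]
  field_simp

lemma inv_tanh_add_tanh {x : ℝ} (hx : x ≠ 0) (y : ℝ) :
    (Real.tanh x)⁻¹ + Real.tanh y = Real.cosh (x + y) * (csch x * sech y) := by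
  have hx' : Real.sinh x ≠ 0 := Real.sinh_eq_zero.not.2 hx
  have hy := (Real.cosh_pos y).ne'
  rw [csch, sech, Real.tanh_eq_sinh_div_cosh, Real.tanh_eq_sinh_div_cosh, inv_div, Real.cosh_add]
  field_simp

lemma tendsto_tanh_atTop : Tendsto Real.tanh atTop (𝓝 1) := by
  have htanh (x : ℝ) : Real.tanh x = 1 - Real.exp (-x) * sech x := by
    rw [← Real.cosh_sub_sinh, sech, ← div_eq_mul_inv, sub_div, div_self (Real.cosh_pos x).ne',
      sub_sub_cancel, Real.tanh_eq_sinh_div_cosh]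
  have hzero : Tendsto (fun x ↦ Real.exp (-x) * sech x) atTop (𝓝 0) :=
    squeeze_zero (fun x ↦ mul_nonneg (Real.exp_pos _).le (sech_pos x).le)
      (fun x ↦ mul_le_of_le_one_right (Real.exp_pos _).le (sech_le_one x))
      (Real.tendsto_exp_atBot.comp tendsto_neg_atTop_atBot)
  simpa [funext htanh] using hzero.const_sub 1

lemma tendsto_tanh_atBot : Tendsto Real.tanh atBot (𝓝 (-1)) := by
  have := (tendsto_tanh_atTop.comp tendsto_neg_atBot_atTop).neg
  simpa [Function.comp_def] using this

end Hyperbolic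

section HyperbolicSums

variable {h : ℝ}

lemma two_mul_add_injective (p : ℤ) : Function.Injective fun n : ℤ ↦ 2 * n + p := by
  intro m n hmn
  simpa using hmn

lemma odd_mul_ne_zero (hh : 0 < h) (n : ℤ) : (2 * n + 1) * h ≠ 0 := by
  have : (2 * n + 1 : ℝ) ≠ 0 := mod_cast (by lia : 2 * n + 1 ≠ 0)
  exact mul_ne_zero this hh.ne'

lemma le_abs_odd_mul (hh : 0 < h) (n : ℤ) : h ≤ |(2 * n + 1) * h| := by
  have hodd : 1 ≤ |(2 * n + 1 : ℝ)| := mod_cast Int.one_le_abs (by lia : 2 * n + 1 ≠ 0)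
  rw [abs_mul, abs_of_pos hh]
  exact le_mul_of_one_le_left hh.le hodd

lemma summable_sech_int_mul (hh : 0 < h) : Summable fun m : ℤ ↦ sech (m * h) := by
  have hexp : Summable fun m : ℤ ↦ Real.exp (-h * |(m : ℝ)|) := by
    have := Real.summable_pow_mul_exp_neg_nat_mul 0 hh
    apply Summable.of_nat_of_neg <;> simpa using this
  refine (hexp.mul_left 2).of_nonneg_of_le (fun m ↦ (sech_pos _).le) fun m ↦ ?_
  simpa [abs_mul, abs_of_pos hh, mul_comm h] using sech_le_two_mul_exp (m * h)

lemma summable_sech_two_mul_add (hh : 0 < h) (p : ℤ) :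
    Summable fun n : ℤ ↦ sech ((2 * n + p) * h) := by
  simpa [Function.comp_def] using
    (summable_sech_int_mul hh).comp_injective (two_mul_add_injective p)

lemma summable_sech_odd (hh : 0 < h) : Summable fun n : ℤ ↦ sech ((2 * n + 1) * h) := by
  simpa using summable_sech_two_mul_add hh 1

lemma summable_sech_even (hh : 0 < h) : Summable fun n : ℤ ↦ sech (2 * n * h) := by
  simpa using summable_sech_two_mul_add hh 0

lemma tsum_sech_odd_pos (hh : 0 < h) : 0 < ∑' n : ℤ, sech ((2 * n + 1) * h) :=
  (summable_sech_odd hh).tsum_pos (fun _ ↦ (sech_pos _).le) 0 (sech_pos _)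

lemma summable_abs_csch_odd (hh : 0 < h) : Summable fun n : ℤ ↦ |csch ((2 * n + 1) * h)| :=
  ((summable_sech_odd hh).mul_left _).of_nonneg_of_le (fun _ ↦ abs_nonneg _)
    fun n ↦ abs_csch_le_inv_tanh_mul_sech hh (le_abs_odd_mul hh n)

lemma summable_mul_of_abs_le_one {ι : Type*} {a b : ι → ℝ} (ha : Summable fun n ↦ |a n|)
    (hb : ∀ n, |b n| ≤ 1) : Summable fun n ↦ a n * b n :=
  .of_norm_bounded ha fun n ↦ by
    simpa [abs_mul] using mul_le_of_le_one_right (abs_nonneg (a n)) (hb n)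

lemma hasSum_tanh_add_sub_tanh (hh : 0 < h) (p m : ℤ) :
    HasSum (fun k : ℤ ↦ Real.tanh ((2 * (k + m : ℤ) + p) * h) - Real.tanh ((2 * k + p) * h))
      (2 * m) := by
  have harg : Tendsto (fun k : ℤ ↦ (2 * (k : ℝ) + p) * h) atTop atTop :=
    (tendsto_atTop_add_const_right _ _
      (tendsto_intCast_atTop_atTop.const_mul_atTop two_pos)).atTop_mul_const hh
  have harg' : Tendsto (fun k : ℤ ↦ (2 * (k : ℝ) + p) * h) atBot atBot :=
    (tendsto_atBot_add_const_right _ _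
      ((tendsto_intCast_atBot_iff.2 tendsto_id).const_mul_atBot two_pos)).atBot_mul_const hh
  have hstep : Summable fun k : ℤ ↦
      Real.tanh ((2 * (k + 1 : ℤ) + p) * h) - Real.tanh ((2 * k + p) * h) := by
    have hprod : Summable fun k : ℤ ↦ sech ((2 * k + p) * h) * sech ((2 * (k + 1 : ℤ) + p) * h) :=
      summable_mul_of_abs_le_one (summable_sech_two_mul_add hh p).abs
        fun k ↦ (abs_sech _).trans_le (sech_le_one _)
    refine (hprod.mul_left (Real.sinh (2 * h))).congr fun k ↦ ?_
    rw [sub_eq_add_neg, ← Real.tanh_neg, tanh_add_tanh, sech_neg, mul_comm (sech _)]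
    congr 2
    push_cast
    ring
  have hsum := hasSum_add_sub (f := fun k : ℤ ↦ Real.tanh ((2 * k + p) * h)) hstep
    (tendsto_tanh_atTop.comp harg) (tendsto_tanh_atBot.comp harg') m
  rwa [zsmul_eq_mul, sub_neg_eq_add, one_add_one_eq_two, mul_comm] at hsum

-- Adding the series to its image under `k ↦ -1 - k` cancels `f` and leaves a telescoping series.
lemma hasSum_add_tanh_of_odd (hh : 0 < h) (p n : ℤ) {f : ℤ → ℝ} (hf : ∀ k, f (-1 - k) = -f k)
    (hs : Summable fun k ↦ f k + Real.tanh ((2 * (n - k : ℤ) + p) * h)) :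
    HasSum (fun k ↦ f k + Real.tanh ((2 * (n - k : ℤ) + p) * h)) (2 * n + 1 + p) := by
  obtain ⟨L, hL⟩ := hs
  have hreflect := (Equiv.subLeft (-1 : ℤ)).hasSum_iff.2 hL
  have htele := (Equiv.addRight (-n - p)).hasSum_iff.2
    (hasSum_tanh_add_sub_tanh hh p (2 * n + 1 + p))
  have hdouble : L + L = 2 * ((2 * n + 1 + p : ℤ) : ℝ) := by
    refine (hL.add hreflect).unique ?_
    convert htele using 1
    ext k
    have harg : (2 * ((k + (-n - p) : ℤ) : ℝ) + p) * h = -((2 * (n - k : ℤ) + p) * h) := by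
      push_cast; ring
    have harg' : k + (-n - p) + (2 * n + 1 + p) = n - (-1 - k) := by ring
    simp only [Function.comp_apply, Equiv.subLeft_apply, Equiv.coe_addRight, hf, harg, harg',
      Real.tanh_neg]
    ring
  have hL_eq : L = 2 * n + 1 + p := by push_cast at hdouble; linarith
  rwa [← hL_eq]

lemma hasSum_sech_mul_sech (hh : 0 < h) (n : ℤ) :
    HasSum (fun k : ℤ ↦ sech ((2 * k + 1) * h) * sech (2 * (n - k : ℤ) * h))
      ((2 * n + 1) * csch ((2 * n + 1) * h)) := by
  have hterm (k : ℤ) : Real.tanh ((2 * k + 1) * h) + Real.tanh ((2 * (n - k : ℤ) + (0 : ℤ)) * h) =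
      Real.sinh ((2 * n + 1) * h) * (sech ((2 * k + 1) * h) * sech (2 * (n - k : ℤ) * h)) := by
    rw [tanh_add_tanh, Int.cast_zero, add_zero]
    congr 2
    push_cast
    ring
  have hs : Summable fun k : ℤ ↦ sech ((2 * k + 1) * h) * sech (2 * (n - k : ℤ) * h) :=
    summable_mul_of_abs_le_one (summable_sech_odd hh).abs
      fun k ↦ (abs_sech _).trans_le (sech_le_one _)
  have hodd (k : ℤ) : Real.tanh ((2 * (-1 - k : ℤ) + 1) * h) = -Real.tanh ((2 * k + 1) * h) := by
    rw [← Real.tanh_neg]; congr 1; push_cast; ring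
  have hsum := hasSum_add_tanh_of_odd hh 0 n hodd
    ((hs.mul_left _).congr fun k ↦ (hterm k).symm)
  simp_rw [hterm] at hsum
  have hne : Real.sinh ((2 * n + 1) * h) ≠ 0 := Real.sinh_eq_zero.not.2 (odd_mul_ne_zero hh n)
  rw [hs.hasSum_iff, csch, eq_mul_inv_iff_mul_eq₀ hne, mul_comm, ← tsum_mul_left, hsum.tsum_eq,
    Int.cast_zero, add_zero]

lemma inv_tanh_odd_add_tanh (hh : 0 < h) (p n k : ℤ) :
    (Real.tanh ((2 * k + 1) * h))⁻¹ + Real.tanh ((2 * (n - k : ℤ) + p) * h) =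
      Real.cosh ((2 * n + 1 + p) * h) *
        (csch ((2 * k + 1) * h) * sech ((2 * (n - k : ℤ) + p) * h)) := by
  rw [inv_tanh_add_tanh (odd_mul_ne_zero hh k)]
  congr 2
  push_cast
  ring

lemma hasSum_csch_mul_sech (hh : 0 < h) (p n : ℤ) :
    HasSum (fun k : ℤ ↦ csch ((2 * k + 1) * h) * sech ((2 * (n - k : ℤ) + p) * h))
      ((2 * n + 1 + p) * sech ((2 * n + 1 + p) * h)) := by
  have hs : Summable fun k : ℤ ↦ csch ((2 * k + 1) * h) * sech ((2 * (n - k : ℤ) + p) * h) :=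
    summable_mul_of_abs_le_one (summable_abs_csch_odd hh)
      fun k ↦ (abs_sech _).trans_le (sech_le_one _)
  have hodd (k : ℤ) :
      (Real.tanh ((2 * (-1 - k : ℤ) + 1) * h))⁻¹ = -(Real.tanh ((2 * k + 1) * h))⁻¹ := by
    rw [← inv_neg, ← Real.tanh_neg]; congr 2; push_cast; ring
  have hsum := hasSum_add_tanh_of_odd hh p n hodd
    ((hs.mul_left _).congr fun k ↦ (inv_tanh_odd_add_tanh hh p n k).symm)
  simp_rw [inv_tanh_odd_add_tanh hh p n] at hsum
  rw [hs.hasSum_iff, sech, eq_mul_inv_iff_mul_eq₀ (Real.cosh_pos _).ne', mul_comm, ← tsum_mul_left,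
    hsum.tsum_eq]

-- Raising `n` by one changes the sum by terms antisymmetric under `k ↦ 2 * n + 1 - k`.
lemma exists_hasSum_alternating_inv_tanh_add_tanh (hh : 0 < h) :
    ∃ T : ℝ, ∀ n : ℤ, HasSum (fun k : ℤ ↦ (-1) ^ k *
      ((Real.tanh ((2 * k + 1) * h))⁻¹ + Real.tanh (2 * (n - k : ℤ) * h))) T := by
  set F : ℤ → ℤ → ℝ := fun n k ↦ (-1) ^ k *
    ((Real.tanh ((2 * k + 1) * h))⁻¹ + Real.tanh (2 * (n - k : ℤ) * h))
  have hs (n : ℤ) : Summable (F n) := by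
    have hprod : Summable fun k : ℤ ↦
        csch ((2 * k + 1) * h) * ((-1) ^ k * sech ((2 * (n - k : ℤ) + (0 : ℤ)) * h)) :=
      summable_mul_of_abs_le_one (summable_abs_csch_odd hh) fun k ↦ by
        simpa [abs_mul, abs_zpow, abs_sech] using sech_le_one _
    refine (hprod.mul_left (Real.cosh ((2 * n + 1 + (0 : ℤ)) * h))).congr fun k ↦ ?_
    rw [mul_left_comm (csch _), mul_left_comm, ← inv_tanh_odd_add_tanh hh 0 n k, Int.cast_zero,
      add_zero]
  have hreflect (n k : ℤ) :
      F (n + 1) (2 * n + 1 - k) - F n (2 * n + 1 - k) = -(F (n + 1) k - F n k) := by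
    have hsign : (-1 : ℝ) ^ (2 * n + 1 - k) = -(-1) ^ k := by
      rw [zpow_sub₀ (by norm_num), (odd_two_mul_add_one n).neg_one_zpow, div_eq_mul_inv, ← inv_zpow,
        inv_neg_one, neg_one_mul]
    have harg : (2 * ((n + 1 - (2 * n + 1 - k) : ℤ) : ℝ) * h) = -(2 * (n - k : ℤ) * h) := by
      push_cast; ring
    have harg' : (2 * ((n - (2 * n + 1 - k) : ℤ) : ℝ) * h) = -(2 * (n + 1 - k : ℤ) * h) := by
      push_cast; ring
    simp only [F, hsign, harg, harg', Real.tanh_neg]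
    ring
  have hperiodic : Function.Periodic (fun n ↦ ∑' k, F n k) 1 := fun n ↦ by
    have hdiff := (hs (n + 1)).tsum_sub (hs n)
    have hanti : ∑' k, (F (n + 1) k - F n k) = -∑' k, (F (n + 1) k - F n k) := by
      rw [← tsum_neg, ← (Equiv.subLeft (2 * n + 1)).tsum_eq]
      exact tsum_congr (hreflect n)
    linarith
  exact ⟨∑' k, F 0 k, fun n ↦ (hs n).hasSum_iff.2 (by simpa using hperiodic.int_mul_eq n)⟩

lemma exists_hasSum_csch_mul_alternating_sech (hh : 0 < h) :
    ∃ T : ℝ, ∀ n : ℤ, HasSum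
      (fun k : ℤ ↦ csch ((2 * k + 1) * h) * ((-1) ^ (n - k) * sech (2 * (n - k : ℤ) * h)))
      ((-1) ^ n * sech ((2 * n + 1) * h) * T) := by
  obtain ⟨T, hT⟩ := exists_hasSum_alternating_inv_tanh_add_tanh hh
  refine ⟨T, fun n ↦ ?_⟩
  have hterm (k : ℤ) : csch ((2 * k + 1) * h) * ((-1) ^ (n - k) * sech (2 * (n - k : ℤ) * h)) =
      (-1) ^ n * sech ((2 * n + 1) * h) * ((-1) ^ k *
        ((Real.tanh ((2 * k + 1) * h))⁻¹ + Real.tanh (2 * (n - k : ℤ) * h))) := by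
    have hsign : (-1 : ℝ) ^ (n - k) = (-1) ^ n * (-1) ^ k := by
      rw [zpow_sub₀ (by norm_num), div_eq_mul_inv, ← inv_zpow, inv_neg_one]
    have hsum := inv_tanh_odd_add_tanh hh 0 n k
    simp only [Int.cast_zero, add_zero] at hsum
    rw [hsum, hsign, sech.eq_1 ((2 * n + 1) * h)]
    field_simp
  simpa only [hterm] using (hT n).mul_left _

lemma tsum_alternating_csch_pos (hh : 0 < h) :
    0 < ∑' n : ℤ, (-1) ^ n * csch ((2 * n + 1) * h) := by
  have hs : Summable fun n : ℤ ↦ (-1) ^ n * csch ((2 * n + 1) * h) := by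
    refine .of_norm_bounded (summable_abs_csch_odd hh) fun n ↦ ?_
    simp
  have hsN : Summable fun n : ℕ ↦ (-1) ^ n * csch ((2 * n + 1) * h) := by
    simpa [Function.comp_def] using hs.comp_injective Nat.cast_injective
  have hstrict : StrictAnti fun n : ℕ ↦ csch ((2 * n + 1) * h) :=
    strictAnti_nat_of_succ_lt fun n ↦ csch_lt_csch (by positivity) (by push_cast; nlinarith)
  have hpos : 0 < ∑' n : ℕ, (-1) ^ n * csch ((2 * n + 1) * h) := by
    have hpartial := hstrict.antitone.alternating_series_le_tendsto hsN.hasSum.tendsto_sum_nat 1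
    have hlt := hstrict one_pos
    norm_num [Finset.sum_range_succ] at hpartial hlt
    linarith
  have hsplit := HasSum.of_nat_of_neg_add_one (f := fun n : ℤ ↦ (-1) ^ n * csch ((2 * n + 1) * h))
    (by simpa using hsN.hasSum) (m' := ∑' n : ℕ, (-1) ^ n * csch ((2 * n + 1) * h)) (by
      convert hsN.hasSum using 2 with n
      have harg : (2 * ((-((n : ℤ) + 1) : ℤ) : ℝ) + 1) * h = -((2 * n + 1) * h) := by
        push_cast; ring
      rw [harg, csch_neg, zpow_neg, ← inv_zpow, inv_neg_one, zpow_add_one₀ (by norm_num),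
        zpow_natCast]
      ring)
  rw [hsplit.tsum_eq]
  exact add_pos hpos hpos

end HyperbolicSums

/-- The character `t ↦ exp (i k t)` of frequency `k`. -/
noncomputable def wave (k : ℤ) (t : ℝ) : ℂ := cexp (k * t * I)

section Wave

lemma norm_wave (k : ℤ) (t : ℝ) : ‖wave k t‖ = 1 := by
  simpa [wave] using norm_exp_ofReal_mul_I (k * t)

lemma wave_zero_right (k : ℤ) : wave k 0 = 1 := by simp [wave]

lemma wave_add (j k : ℤ) (t : ℝ) : wave (j + k) t = wave j t * wave k t := by
  rw [wave, wave, wave, ← Complex.exp_add]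
  push_cast
  ring_nf

lemma wave_add_arg (k : ℤ) (t s : ℝ) : wave k (t + s) = wave k t * wave k s := by
  rw [wave, wave, wave, ← Complex.exp_add]
  push_cast
  ring_nf

lemma wave_neg_arg (k : ℤ) (t : ℝ) : wave k (-t) = wave (-k) t := by simp [wave]

lemma conj_wave (k : ℤ) (t : ℝ) : conj (wave k t) = wave (-k) t := by
  simp [wave, ← Complex.exp_conj]

lemma wave_pi_div_two (k : ℤ) : wave k (π / 2) = I ^ k := by
  rw [wave, mul_assoc, Complex.exp_int_mul]
  push_cast
  rw [exp_pi_div_two_mul_I]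

lemma wave_pi (k : ℤ) : wave k π = (-1) ^ k := by
  rw [wave, mul_assoc, Complex.exp_int_mul, exp_pi_mul_I]

lemma wave_two_pi (k : ℤ) : wave k (2 * π) = 1 := by
  rw [two_mul, wave_add_arg, wave_pi, ← zpow_add₀ (by norm_num), Even.neg_one_zpow ⟨k, rfl⟩]

lemma hasDerivAt_wave (k : ℤ) (t : ℝ) : HasDerivAt (wave k) (I * k * wave k t) t := by
  have hlin : HasDerivAt (fun s : ℝ ↦ (k * s * I : ℂ)) (k * I) t := by
    simpa using (hasDerivAt_id t).ofReal_comp.const_mul (k : ℂ) |>.mul_const I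
  have hexp : HasDerivAt (wave k) (wave k t * (k * I)) t := hlin.cexp
  rwa [mul_comm I, mul_comm]

lemma continuous_wave (k : ℤ) : Continuous (wave k) :=
  continuous_iff_continuousAt.2 fun t ↦ (hasDerivAt_wave k t).continuousAt

lemma integral_wave (k : ℤ) : ∫ t in 0..2 * π, wave k t = if k = 0 then (2 * π : ℂ) else 0 := by
  split_ifs with hk
  · simp [hk, wave]
  · have hderiv (t : ℝ) : HasDerivAt (fun s ↦ wave k s / (I * k)) (wave k t) t := by
      have hne : I * (k : ℂ) ≠ 0 := mul_ne_zero I_ne_zero (mod_cast hk)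
      simpa [mul_div_cancel_left₀ _ hne] using (hasDerivAt_wave k t).div_const (I * k)
    rw [intervalIntegral.integral_eq_sub_of_hasDerivAt (fun t _ ↦ hderiv t)
      ((continuous_wave k).intervalIntegrable _ _), wave_two_pi, wave_zero_right, sub_self]

end Wave

/-- The substitution `(n, k) ↦ (k, n - k)`, which turns a double series into the series of the
diagonal sums `conv`. -/
def convEquiv : ℤ × ℤ ≃ ℤ × ℤ :=
  (Equiv.prodComm ℤ ℤ).trans ((Equiv.refl ℤ).prodShear Equiv.subRight)

section Convolution

variable {a b : ℤ → ℂ}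

lemma summable_mul_sub (ha : Summable a) (hb : Summable b) :
    Summable fun p : ℤ × ℤ ↦ a p.2 * b (p.1 - p.2) := by
  have hprod : Summable fun p : ℤ × ℤ ↦ a p.1 * b p.2 :=
    summable_mul_of_summable_norm ha.norm hb.norm
  exact (convEquiv.summable_iff (f := fun p : ℤ × ℤ ↦ a p.1 * b p.2)).2 hprod

lemma summable_conv (ha : Summable a) (hb : Summable b) : Summable (conv a b) :=
  (summable_mul_sub ha hb).prod

lemma tsum_mul_tsum_eq_tsum_conv (ha : Summable a) (hb : Summable b) :
    (∑' n, a n) * ∑' n, b n = ∑' n, conv a b n := by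
  rw [tsum_mul_tsum_of_summable_norm ha.norm hb.norm, ← convEquiv.tsum_eq]
  exact (summable_mul_sub ha hb).tsum_prod

lemma conv_ofReal {f g : ℤ → ℝ} {n : ℤ} {s : ℝ} (hs : HasSum (fun k ↦ f k * g (n - k)) s) :
    conv (fun k ↦ (f k : ℂ)) (fun k ↦ (g k : ℂ)) n = s := by
  rw [conv, ← hs.tsum_eq, ofReal_tsum]
  simp only [ofReal_mul]

end Convolution

/-- The trigonometric series `∑ₙ cₙ exp (i ωₙ t)` with coefficients `c` and frequencies `ω`. -/
noncomputable def waveSeries {ι : Type*} (ω : ι → ℤ) (c : ι → ℂ) (t : ℝ) : ℂ :=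
  ∑' n, c n * wave (ω n) t

section WaveSeries

variable {ι κ : Type*} {ω : ι → ℤ} {c d : ι → ℂ}

lemma summable_mul_wave (hc : Summable c) (t : ℝ) : Summable fun n ↦ c n * wave (ω n) t :=
  .of_norm_bounded hc.norm fun n ↦ by rw [norm_mul, norm_wave, mul_one]

lemma waveSeries_zero_right (ω : ι → ℤ) (c : ι → ℂ) : waveSeries ω c 0 = ∑' n, c n := by
  simp only [waveSeries, wave_zero_right, mul_one]

lemma waveSeries_comp_equiv (e : κ ≃ ι) (ω : ι → ℤ) (c : ι → ℂ) (t : ℝ) :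
    waveSeries (ω ∘ e) (c ∘ e) t = waveSeries ω c t :=
  e.tsum_eq fun n ↦ c n * wave (ω n) t

lemma waveSeries_const_mul (z : ℂ) (ω : ι → ℤ) (c : ι → ℂ) (t : ℝ) :
    waveSeries ω (fun n ↦ z * c n) t = z * waveSeries ω c t := by
  simp only [waveSeries, mul_assoc, tsum_mul_left]

lemma waveSeries_add_arg (ω : ι → ℤ) (c : ι → ℂ) (t s : ℝ) :
    waveSeries ω c (t + s) = waveSeries ω (fun n ↦ c n * wave (ω n) s) t := by
  simp only [waveSeries, wave_add_arg, mul_right_comm _ (wave _ s), mul_assoc]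

lemma waveSeries_add_arg_eq_mul {s : ℝ} {z : ℂ} (hs : ∀ n, wave (ω n) s = z) (c : ι → ℂ) (t : ℝ) :
    waveSeries ω c (t + s) = z * waveSeries ω c t := by
  simp only [waveSeries_add_arg, hs, mul_comm _ z, waveSeries_const_mul]

lemma periodic_waveSeries (ω : ι → ℤ) (c : ι → ℂ) :
    Function.Periodic (waveSeries ω c) (2 * π) := fun t ↦ by
  rw [waveSeries_add_arg_eq_mul (fun n ↦ wave_two_pi (ω n)), one_mul]

lemma waveSeries_neg_arg (e : ι ≃ ι) (hω : ∀ n, ω (e n) = -ω n) {z : ℂ}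
    (hc : ∀ n, c (e n) = z * c n) (t : ℝ) : waveSeries ω c (-t) = z * waveSeries ω c t := by
  rw [← waveSeries_comp_equiv e, ← waveSeries_const_mul]
  simp only [waveSeries, Function.comp_apply, hω, hc, wave_neg_arg, neg_neg]

lemma conj_waveSeries (e : ι ≃ ι) (hω : ∀ n, ω (e n) = -ω n) (hc : ∀ n, c (e n) = conj (c n))
    (t : ℝ) : conj (waveSeries ω c t) = waveSeries ω c t := by
  conv_rhs => rw [← waveSeries_comp_equiv e]
  simp only [waveSeries, conj_tsum, map_mul, Function.comp_apply, hω, hc, conj_wave]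

lemma continuous_waveSeries (hc : Summable c) : Continuous (waveSeries ω c) :=
  continuous_tsum (fun n ↦ continuous_const.mul (continuous_wave (ω n))) hc.norm
    fun n t ↦ by rw [norm_mul, norm_wave, mul_one]

lemma hasDerivAt_waveSeries (hc : Summable c) (hd : Summable d) (hcd : ∀ n, I * (ω n * c n) = d n)
    (t : ℝ) : HasDerivAt (waveSeries ω c) (waveSeries ω d t) t := by
  refine hasDerivAt_tsum (g := fun n s ↦ c n * wave (ω n) s) (g' := fun n s ↦ d n * wave (ω n) s)
    hd.norm (fun n s ↦ ?_) (fun n s ↦ ?_) (summable_mul_wave hc 0) t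
  · have hterm : d n * wave (ω n) s = c n * (I * ω n * wave (ω n) s) := by rw [← hcd]; ring
    simpa only [hterm] using (hasDerivAt_wave (ω n) s).const_mul (c n)
  · rw [norm_mul, norm_wave, mul_one]

lemma integral_waveSeries_mul_wave_neg (hω : Function.Injective ω) (hc : Summable c) (m : ι) :
    ∫ t in 0..2 * π, waveSeries ω c t * wave (-ω m) t = 2 * π * c m := by
  classical
  have := hω.countable
  have hterm (n : ι) :
      ∫ t in 0..2 * π, c n * wave (ω n) t * wave (-ω m) t = if n = m then 2 * π * c m else 0 := by
    simp only [mul_assoc, ← wave_add, intervalIntegral.integral_const_mul, integral_wave,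
      add_neg_eq_zero, hω.eq_iff]
    split_ifs with hnm
    · rw [hnm]; ring
    · exact mul_zero _
  have hsum := intervalIntegral.hasSum_integral_of_dominated_convergence
    (F := fun n t ↦ c n * wave (ω n) t * wave (-ω m) t) (μ := MeasureTheory.volume)
    (a := 0) (b := 2 * π) (fun n _ ↦ ‖c n‖)
    (fun n ↦ ((continuous_const.mul (continuous_wave _)).mul
      (continuous_wave _)).aestronglyMeasurable)
    (fun n ↦ by simp [norm_wave]) (by simp [hc.norm]) (by simp)
    (.of_forall fun t _ ↦ (summable_mul_wave hc t).hasSum.mul_right _)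
  simp only [hterm] at hsum
  exact hsum.unique (hasSum_ite_eq m _)

end WaveSeries

section WaveSeriesMul

variable {ω₁ ω₂ ω₃ : ℤ → ℤ} {a b c : ℤ → ℂ}

lemma waveSeries_mul (hω : ∀ j k, ω₃ (j + k) = ω₁ j + ω₂ k) (ha : Summable a) (hb : Summable b)
    (t : ℝ) : waveSeries ω₁ a t * waveSeries ω₂ b t = waveSeries ω₃ (conv a b) t := by
  rw [waveSeries, waveSeries,
    tsum_mul_tsum_eq_tsum_conv (summable_mul_wave ha t) (summable_mul_wave hb t)]
  refine tsum_congr fun n ↦ ?_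
  rw [conv, conv, ← tsum_mul_right]
  refine tsum_congr fun k ↦ ?_
  have hn : ω₃ n = ω₁ k + ω₂ (n - k) := by rw [← hω, add_sub_cancel]
  rw [hn, wave_add]
  ring

lemma hasDerivAt_waveSeries_of_conv_eq (hω : ∀ j k, ω₃ (j + k) = ω₁ j + ω₂ k) (ha : Summable a)
    (hb : Summable b) (hc : Summable c) (hconv : ∀ n, conv a b n = ω₃ n * c n) (t : ℝ) :
    HasDerivAt (waveSeries ω₃ c) (I * (waveSeries ω₁ a t * waveSeries ω₂ b t)) t := by
  rw [waveSeries_mul hω ha hb, ← waveSeries_const_mul]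
  exact hasDerivAt_waveSeries hc ((summable_conv ha hb).mul_left I) (fun n ↦ by rw [hconv]) t

end WaveSeriesMul

/-- The elliptic function `(2K/π) dn(2Kt/π)`, through its Fourier series. The modulus `k`, with
complete elliptic integrals `K` and `K'`, is encoded by `h = πK'/(2K)`, that is, by the nome
`exp (-2h)`. -/
noncomputable def jacobiDn (h : ℝ) : ℝ → ℂ :=
  waveSeries (fun n : ℤ ↦ 2 * n) fun n ↦ (sech (2 * n * h) : ℝ)

/-- The elliptic function `(2kK/π) cn(2Kt/π)`, through its Fourier series. -/
noncomputable def jacobiCn (h : ℝ) : ℝ → ℂ :=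
  waveSeries (fun n : ℤ ↦ 2 * n + 1) fun n ↦ (sech ((2 * n + 1) * h) : ℝ)

/-- The elliptic function `i (2kK/π) sn(2Kt/π)`, through its Fourier series. The factor `i` keeps
the coefficients real. -/
noncomputable def jacobiSn (h : ℝ) : ℝ → ℂ :=
  waveSeries (fun n : ℤ ↦ 2 * n + 1) fun n ↦ (csch ((2 * n + 1) * h) : ℝ)

/-- The angle `arcsin (k sn(2Kt/π))`, through its Fourier series. -/
noncomputable def jacobiAngle (h : ℝ) : ℝ → ℂ :=
  waveSeries (fun n : ℤ ↦ 2 * n + 1) fun n ↦ (sech ((2 * n + 1) * h) : ℝ) / (I * (2 * n + 1))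

/-- The maximum `2K/π` of the function `jacobiDn h`, attained at `0`. -/
noncomputable def dnMax (h : ℝ) : ℝ := ∑' n : ℤ, sech (2 * n * h)

section Symmetry

variable (h t : ℝ)

lemma two_mul_neg_one_sub_add_one (n : ℤ) : 2 * (-1 - n) + 1 = -(2 * n + 1) := by ring

lemma odd_reflect_mul (n : ℤ) : (2 * ((-1 - n : ℤ) : ℝ) + 1) * h = -((2 * n + 1) * h) := by
  push_cast
  ring

lemma jacobiAngle_neg : jacobiAngle h (-t) = -jacobiAngle h t := by
  rw [← neg_one_mul (jacobiAngle h t)]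
  refine waveSeries_neg_arg (Equiv.subLeft (-1)) two_mul_neg_one_sub_add_one (fun n ↦ ?_) t
  rw [Equiv.subLeft_apply, odd_reflect_mul, sech_neg, neg_one_mul, ← div_neg]
  push_cast
  ring

lemma jacobiSn_neg : jacobiSn h (-t) = -jacobiSn h t := by
  rw [← neg_one_mul (jacobiSn h t)]
  refine waveSeries_neg_arg (Equiv.subLeft (-1)) two_mul_neg_one_sub_add_one (fun n ↦ ?_) t
  rw [Equiv.subLeft_apply, odd_reflect_mul, csch_neg, ofReal_neg, neg_one_mul]

lemma jacobiCn_neg : jacobiCn h (-t) = jacobiCn h t := by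
  rw [← one_mul (jacobiCn h t)]
  refine waveSeries_neg_arg (Equiv.subLeft (-1)) two_mul_neg_one_sub_add_one (fun n ↦ ?_) t
  rw [Equiv.subLeft_apply, odd_reflect_mul, sech_neg, one_mul]

lemma conj_jacobiAngle : conj (jacobiAngle h t) = jacobiAngle h t := by
  refine conj_waveSeries (Equiv.subLeft (-1)) two_mul_neg_one_sub_add_one (fun n ↦ ?_) t
  rw [Equiv.subLeft_apply, odd_reflect_mul, sech_neg]
  simp only [map_div₀, map_mul, map_add, map_one, conj_ofReal, conj_I, map_intCast, map_ofNat]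
  push_cast
  ring

lemma jacobiAngle_zero : jacobiAngle h 0 = 0 := by
  simpa [self_eq_neg] using jacobiAngle_neg h 0

lemma jacobiSn_zero : jacobiSn h 0 = 0 := by
  simpa [self_eq_neg] using jacobiSn_neg h 0

lemma jacobiDn_zero : jacobiDn h 0 = dnMax h := by
  rw [jacobiDn, waveSeries_zero_right, dnMax, ofReal_tsum]

lemma jacobiDn_add_pi : jacobiDn h (t + π) = jacobiDn h t := by
  rw [← one_mul (jacobiDn h t)]
  exact waveSeries_add_arg_eq_mul (fun n ↦ by rw [wave_pi, (even_two_mul n).neg_one_zpow]) _ t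

lemma jacobiCn_add_pi : jacobiCn h (t + π) = -jacobiCn h t := by
  rw [← neg_one_mul]
  exact waveSeries_add_arg_eq_mul (fun n ↦ by rw [wave_pi, (odd_two_mul_add_one n).neg_one_zpow])
    _ t

lemma jacobiCn_pi_div_two : jacobiCn h (π / 2) = 0 := by
  have hshift := jacobiCn_add_pi h (-(π / 2))
  rwa [jacobiCn_neg, neg_add_eq_sub, sub_half, self_eq_neg] at hshift

lemma wave_even_pi_div_two (n : ℤ) : wave (2 * n) (π / 2) = (-1) ^ n := by
  rw [wave_pi_div_two, zpow_mul, zpow_ofNat, I_sq]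

lemma wave_odd_pi_div_two (n : ℤ) : wave (2 * n + 1) (π / 2) = I * (-1) ^ n := by
  rw [wave_add, wave_even_pi_div_two, wave_pi_div_two, zpow_one, mul_comm]

end Symmetry

section JacobiODE

variable {h : ℝ}

lemma summable_ofReal_sech_odd (hh : 0 < h) :
    Summable fun n : ℤ ↦ ((sech ((2 * n + 1) * h) : ℝ) : ℂ) :=
  summable_ofReal.2 (summable_sech_odd hh)

lemma summable_ofReal_sech_even (hh : 0 < h) : Summable fun n : ℤ ↦ ((sech (2 * n * h) : ℝ) : ℂ) :=
  summable_ofReal.2 (summable_sech_even hh)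

lemma summable_ofReal_csch_odd (hh : 0 < h) :
    Summable fun n : ℤ ↦ ((csch ((2 * n + 1) * h) : ℝ) : ℂ) :=
  summable_ofReal.2 (summable_abs_csch_odd hh).of_abs

lemma odd_cast_ne_zero (n : ℤ) : (2 * n + 1 : ℂ) ≠ 0 := mod_cast (by lia : 2 * n + 1 ≠ 0)

lemma summable_jacobiAngle_coeff (hh : 0 < h) :
    Summable fun n : ℤ ↦ ((sech ((2 * n + 1) * h) : ℝ) / (I * (2 * n + 1)) : ℂ) := by
  refine .of_norm_bounded (summable_sech_odd hh) fun n ↦ ?_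
  have hodd : 1 ≤ ‖(2 * n + 1 : ℂ)‖ := by
    have : (1 : ℝ) ≤ |((2 * n + 1 : ℤ) : ℝ)| := mod_cast Int.one_le_abs (by lia : 2 * n + 1 ≠ 0)
    rwa [← norm_intCast, Int.cast_add, Int.cast_mul, Int.cast_one, Int.cast_ofNat] at this
  rw [norm_div, norm_mul, norm_I, one_mul, norm_real, Real.norm_eq_abs, abs_sech]
  exact div_le_self (sech_pos _).le hodd

lemma hasDerivAt_jacobiAngle (hh : 0 < h) (t : ℝ) :
    HasDerivAt (jacobiAngle h) (jacobiCn h t) t := by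
  refine hasDerivAt_waveSeries (summable_jacobiAngle_coeff hh) (summable_ofReal_sech_odd hh)
    (fun n ↦ ?_) t
  have hne := odd_cast_ne_zero n
  have hI := I_ne_zero
  push_cast
  field_simp

lemma hasDerivAt_jacobiSn (hh : 0 < h) (t : ℝ) :
    HasDerivAt (jacobiSn h) (I * (jacobiCn h t * jacobiDn h t)) t := by
  refine hasDerivAt_waveSeries_of_conv_eq (fun j k ↦ by ring) (summable_ofReal_sech_odd hh)
    (summable_ofReal_sech_even hh) (summable_ofReal_csch_odd hh) (fun n ↦ ?_) t
  rw [conv_ofReal (f := fun k ↦ sech ((2 * k + 1) * h)) (g := fun k ↦ sech (2 * k * h))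
    (hasSum_sech_mul_sech hh n)]
  push_cast
  ring

lemma hasDerivAt_jacobiCn (hh : 0 < h) (t : ℝ) :
    HasDerivAt (jacobiCn h) (I * (jacobiSn h t * jacobiDn h t)) t := by
  refine hasDerivAt_waveSeries_of_conv_eq (fun j k ↦ by ring) (summable_ofReal_csch_odd hh)
    (summable_ofReal_sech_even hh) (summable_ofReal_sech_odd hh) (fun n ↦ ?_) t
  have hsum := hasSum_csch_mul_sech hh 0 n
  simp only [Int.cast_zero, add_zero] at hsum
  rw [conv_ofReal (f := fun k ↦ csch ((2 * k + 1) * h)) (g := fun k ↦ sech (2 * k * h)) hsum]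
  push_cast
  ring

lemma hasDerivAt_jacobiDn (hh : 0 < h) (t : ℝ) :
    HasDerivAt (jacobiDn h) (I * (jacobiSn h t * jacobiCn h t)) t := by
  have hshift : jacobiDn h = _ :=
    funext fun s ↦ (waveSeries_comp_equiv (Equiv.addRight (1 : ℤ)) _ _ s).symm
  rw [hshift]
  refine hasDerivAt_waveSeries_of_conv_eq (fun j k ↦ ?_) (summable_ofReal_csch_odd hh)
    (summable_ofReal_sech_odd hh) ((Equiv.addRight (1 : ℤ)).summable_iff.2
      (summable_ofReal_sech_even hh)) (fun n ↦ ?_) t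
  · simp only [Function.comp_apply, Equiv.coe_addRight]
    ring
  have hsum := hasSum_csch_mul_sech hh 1 n
  simp only [Int.cast_one] at hsum
  rw [conv_ofReal (f := fun k ↦ csch ((2 * k + 1) * h)) (g := fun k ↦ sech ((2 * k + 1) * h)) hsum]
  simp only [Function.comp_apply, Equiv.coe_addRight]
  push_cast
  ring_nf

end JacobiODE

section JacobiIdentities

variable {h : ℝ}

lemma eq_mul_cexp_of_hasDerivAt {f g g' : ℝ → ℂ} (hf : ∀ t, HasDerivAt f (g' t * f t) t)
    (hg : ∀ t, HasDerivAt g (g' t) t) (t : ℝ) : f t = f 0 * cexp (g t - g 0) := by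
  have hquot (s : ℝ) : HasDerivAt (fun u ↦ f u * cexp (-g u)) 0 s :=
    ((hf s).mul (hg s).neg.cexp).congr_deriv (by ring)
  have hconst : f t * cexp (-g t) = f 0 * cexp (-g 0) :=
    is_const_of_deriv_eq_zero (fun s ↦ (hquot s).differentiableAt) (fun s ↦ (hquot s).deriv) t 0
  calc f t = f t * cexp (-g t) * cexp (g t) := by
        rw [mul_assoc, ← Complex.exp_add, neg_add_cancel, Complex.exp_zero, mul_one]
    _ = f 0 * cexp (g t - g 0) := by
        rw [hconst, mul_assoc, ← Complex.exp_add, neg_add_eq_sub]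

lemma jacobiDn_add_mul_jacobiSn (hh : 0 < h) {z : ℂ} (hz : z ^ 2 = 1) (t : ℝ) :
    jacobiDn h t + z * jacobiSn h t = dnMax h * cexp (z * I * jacobiAngle h t) := by
  have hderiv (s : ℝ) : HasDerivAt (fun u ↦ jacobiDn h u + z * jacobiSn h u)
      (z * I * jacobiCn h s * (jacobiDn h s + z * jacobiSn h s)) s :=
    ((hasDerivAt_jacobiDn hh s).add ((hasDerivAt_jacobiSn hh s).const_mul z)).congr_deriv
      (by linear_combination -(I * jacobiSn h s * jacobiCn h s) * hz)
  rw [eq_mul_cexp_of_hasDerivAt hderiv (fun s ↦ (hasDerivAt_jacobiAngle hh s).const_mul (z * I)) t,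
    jacobiDn_zero, jacobiSn_zero, jacobiAngle_zero, mul_zero, mul_zero, add_zero, sub_zero]

lemma dnMax_sq_mul_sin_add (hh : 0 < h) (s t : ℝ) :
    dnMax h ^ 2 * Complex.sin (jacobiAngle h s + jacobiAngle h t) =
      -I * (jacobiDn h s * jacobiSn h t + jacobiSn h s * jacobiDn h t) := by
  have hplus := jacobiDn_add_mul_jacobiSn hh (one_pow 2)
  have hminus := jacobiDn_add_mul_jacobiSn hh (z := -1) (by norm_num)
  have hexp (z : ℂ) : cexp (z * I * jacobiAngle h s) * cexp (z * I * jacobiAngle h t) =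
      cexp (z * (jacobiAngle h s + jacobiAngle h t) * I) := by
    rw [← Complex.exp_add]; ring_nf
  have hplus' := congrArg₂ (· * ·) (hplus s) (hplus t)
  have hminus' := congrArg₂ (· * ·) (hminus s) (hminus t)
  simp only [mul_mul_mul_comm (dnMax h : ℂ), hexp] at hplus' hminus'
  rw [Complex.sin, ← neg_one_mul (jacobiAngle h s + jacobiAngle h t)]
  rw [one_mul (jacobiAngle h s + jacobiAngle h t)] at hplus'
  linear_combination I / 2 * (hplus' - hminus')

lemma jacobiCn_sq_sub_jacobiSn_sq (hh : 0 < h) (t : ℝ) :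
    jacobiCn h t ^ 2 - jacobiSn h t ^ 2 = jacobiCn h 0 ^ 2 := by
  have hderiv (s : ℝ) : HasDerivAt (fun u ↦ jacobiCn h u ^ 2 - jacobiSn h u ^ 2) 0 s :=
    (((hasDerivAt_jacobiCn hh s).pow 2).sub ((hasDerivAt_jacobiSn hh s).pow 2)).congr_deriv
      (by ring)
  have hconst := is_const_of_deriv_eq_zero (fun s ↦ (hderiv s).differentiableAt)
    (fun s ↦ (hderiv s).deriv) t 0
  simpa [jacobiSn_zero] using hconst

lemma jacobiCn_zero_eq_tsum (h : ℝ) :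
    jacobiCn h 0 = ((∑' n : ℤ, sech ((2 * n + 1) * h) : ℝ) : ℂ) := by
  rw [jacobiCn, waveSeries_zero_right, ofReal_tsum]

lemma jacobiCn_zero_ne_zero (hh : 0 < h) : jacobiCn h 0 ≠ 0 := by
  rw [jacobiCn_zero_eq_tsum]
  exact mod_cast (tsum_sech_odd_pos hh).ne'

lemma jacobiSn_pi_div_two_eq_tsum (h : ℝ) :
    jacobiSn h (π / 2) = I * ((∑' n : ℤ, (-1) ^ n * csch ((2 * n + 1) * h) : ℝ) : ℂ) := by
  rw [jacobiSn, waveSeries, ofReal_tsum, ← tsum_mul_left]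
  refine tsum_congr fun n ↦ ?_
  rw [wave_odd_pi_div_two]
  push_cast
  ring

lemma jacobiSn_pi_div_two (hh : 0 < h) : jacobiSn h (π / 2) = I * jacobiCn h 0 := by
  have hsq := jacobiCn_sq_sub_jacobiSn_sq hh (π / 2)
  rw [jacobiCn_pi_div_two, jacobiSn_pi_div_two_eq_tsum, jacobiCn_zero_eq_tsum, mul_pow, I_sq,
    neg_one_mul, sub_neg_eq_add, zero_pow two_ne_zero, zero_add] at hsq
  rw [jacobiSn_pi_div_two_eq_tsum, jacobiCn_zero_eq_tsum]
  congr 2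
  exact (sq_eq_sq₀ (tsum_alternating_csch_pos hh).le (tsum_sech_odd_pos hh).le).1
    (mod_cast hsq)

-- Both sides have the same Fourier coefficients up to a constant factor, read off at `-π / 2`.
lemma jacobiSn_mul_jacobiDn_add_pi_div_two (hh : 0 < h) (t : ℝ) :
    jacobiSn h t * jacobiDn h (t + π / 2) = -I * dnMax h * jacobiCn h (t + π / 2) := by
  obtain ⟨T, hT⟩ := exists_hasSum_csch_mul_alternating_sech hh
  have hprod (s : ℝ) : jacobiSn h s * jacobiDn h (s + π / 2) = -I * T * jacobiCn h (s + π / 2) := by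
    have hDn : jacobiDn h (s + π / 2) =
        waveSeries (fun n : ℤ ↦ 2 * n) (fun n ↦ ((-1) ^ n * sech (2 * n * h) : ℝ)) s := by
      rw [jacobiDn, waveSeries_add_arg]
      congr 1
      ext n
      rw [wave_even_pi_div_two, mul_comm]
      push_cast
      rfl
    have hsD : Summable fun n : ℤ ↦ (((-1) ^ n * sech (2 * n * h) : ℝ) : ℂ) :=
      .of_norm_bounded (summable_sech_even hh) fun n ↦ by simp [abs_sech]
    rw [hDn, jacobiSn, waveSeries_mul (ω₃ := fun n ↦ 2 * n + 1) (fun j k ↦ by ring)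
      (summable_ofReal_csch_odd hh) hsD,
      jacobiCn, waveSeries_add_arg, ← waveSeries_const_mul]
    congr 1
    ext n
    rw [conv_ofReal (f := fun k ↦ csch ((2 * k + 1) * h))
      (g := fun k ↦ (-1) ^ k * sech (2 * k * h)) (hT n), wave_odd_pi_div_two]
    push_cast
    linear_combination (-1) ^ n * (sech ((2 * n + 1) * h) : ℂ) * T * I_sq
  have hT_eq : (T : ℂ) = dnMax h := by
    have hval := hprod (-(π / 2))
    rw [neg_add_cancel, jacobiSn_neg, jacobiSn_pi_div_two hh, jacobiDn_zero] at hval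
    refine mul_right_cancel₀ (mul_ne_zero I_ne_zero (jacobiCn_zero_ne_zero hh)) ?_
    linear_combination hval
  rw [hprod, hT_eq]

lemma jacobiDn_mul_jacobiSn_add_jacobiSn_mul_jacobiDn (hh : 0 < h) (t : ℝ) :
    jacobiDn h t * jacobiSn h (t - π / 2) + jacobiSn h t * jacobiDn h (t - π / 2) =
      -I * dnMax h * (jacobiCn h t + jacobiCn h (t + π / 2)) := by
  have hleft := jacobiSn_mul_jacobiDn_add_pi_div_two hh (t - π / 2)
  have hright := jacobiSn_mul_jacobiDn_add_pi_div_two hh t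
  have hperiod : jacobiDn h (t + π / 2) = jacobiDn h (t - π / 2) := by
    rw [← jacobiDn_add_pi h (t - π / 2)]; ring_nf
  rw [sub_add_cancel] at hleft
  rw [hperiod] at hright
  linear_combination hleft + hright

end JacobiIdentities

/-- The Kaplan–Yorke orbit: the superposition of the angle and its quarter-period shift. -/
noncomputable def orbit (h t : ℝ) : ℝ := (jacobiAngle h t + jacobiAngle h (t + π / 2)).re

section Orbit

variable {h : ℝ}

lemma ofReal_orbit (h t : ℝ) : (orbit h t : ℂ) = jacobiAngle h t + jacobiAngle h (t + π / 2) :=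
  conj_eq_iff_re.1 (by rw [map_add, conj_jacobiAngle, conj_jacobiAngle])

lemma periodic_orbit (h : ℝ) : Function.Periodic (orbit h) (2 * π) := fun t ↦ by
  have hangle : Function.Periodic (jacobiAngle h) (2 * π) := periodic_waveSeries _ _
  rw [orbit, add_right_comm, hangle, hangle, orbit]

lemma hasDerivAt_orbit (hh : 0 < h) (t : ℝ) :
    HasDerivAt (orbit h) (jacobiCn h t + jacobiCn h (t + π / 2)).re t := by
  have hsum := (hasDerivAt_jacobiAngle hh t).add
    ((hasDerivAt_jacobiAngle hh (t + π / 2)).comp_add_const t (π / 2))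
  exact reCLM.hasFDerivAt.comp_hasDerivAt t hsum

lemma contDiff_orbit (hh : 0 < h) : ContDiff ℝ 1 (orbit h) := by
  have hCn : Continuous (jacobiCn h) := continuous_waveSeries (summable_ofReal_sech_odd hh)
  rw [contDiff_one_iff_deriv, funext fun t ↦ (hasDerivAt_orbit hh t).deriv]
  exact ⟨fun t ↦ (hasDerivAt_orbit hh t).differentiableAt, by fun_prop⟩

lemma dnMax_pos (hh : 0 < h) : 0 < dnMax h :=
  (summable_sech_even hh).tsum_pos (fun _ ↦ (sech_pos _).le) 0 (sech_pos _)

lemma deriv_orbit (hh : 0 < h) (t : ℝ) :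
    deriv (orbit h) t = -dnMax h * Real.sin (orbit h (t - π / 2)) := by
  have hsin := dnMax_sq_mul_sin_add hh t (t - π / 2)
  rw [jacobiDn_mul_jacobiSn_add_jacobiSn_mul_jacobiDn hh] at hsin
  have hdelay : (orbit h (t - π / 2) : ℂ) = jacobiAngle h t + jacobiAngle h (t - π / 2) := by
    rw [ofReal_orbit, sub_add_cancel, add_comm]
  have hne : (dnMax h : ℂ) ≠ 0 := mod_cast (dnMax_pos hh).ne'
  have hcomplex : jacobiCn h t + jacobiCn h (t + π / 2) =
      ((-dnMax h * Real.sin (orbit h (t - π / 2)) : ℝ) : ℂ) := by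
    refine mul_left_cancel₀ hne ?_
    push_cast
    rw [hdelay]
    linear_combination hsin + dnMax h * (jacobiCn h t + jacobiCn h (t + π / 2)) * I_sq
  rw [(hasDerivAt_orbit hh t).deriv, hcomplex, ofReal_re]

lemma integral_jacobiAngle_add_mul_wave_neg_one (hh : 0 < h) (φ : ℝ) :
    ∫ t in 0..2 * π, jacobiAngle h (t + φ) * wave (-1) t =
      2 * π * (sech h / I * wave 1 φ) := by
  simp only [jacobiAngle, waveSeries_add_arg]
  have hcoeff : Summable fun n : ℤ ↦
      ((sech ((2 * n + 1) * h) : ℝ) / (I * (2 * n + 1)) : ℂ) * wave (2 * n + 1) φ :=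
    summable_mul_wave (summable_jacobiAngle_coeff hh) φ
  simpa using integral_waveSeries_mul_wave_neg (two_mul_add_injective 1) hcoeff 0

lemma wave_neg_one (t : ℝ) : wave (-1) t = cexp (-(I * t)) := by
  rw [wave]
  push_cast
  ring_nf

lemma firstFourierCoeff_orbit_add (hh : 0 < h) (φ : ℝ) :
    ((1 / (2 * π) : ℝ) : ℂ) * ∫ t in 0..2 * π, (orbit h (t + φ) : ℂ) * cexp (-(I * t)) =
      sech h * (1 - I) * cexp (φ * I) := by
  have hangle : Continuous (jacobiAngle h) := continuous_waveSeries (summable_jacobiAngle_coeff hh)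
  have hwave := continuous_wave (-1)
  have hquarter : wave 1 (φ + π / 2) = I * cexp (φ * I) := by
    rw [wave_add_arg, wave_pi_div_two, zpow_one, mul_comm, wave, Int.cast_one, one_mul]
  have hpi : (π : ℂ) ≠ 0 := mod_cast Real.pi_ne_zero
  simp only [ofReal_orbit, ← wave_neg_one, add_mul, add_assoc _ φ]
  rw [intervalIntegral.integral_add (Continuous.intervalIntegrable (by fun_prop) _ _)
    (Continuous.intervalIntegrable (by fun_prop) _ _),
    integral_jacobiAngle_add_mul_wave_neg_one hh, integral_jacobiAngle_add_mul_wave_neg_one hh,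
    hquarter, div_I, wave, Int.cast_one, one_mul]
  push_cast
  field_simp
  linear_combination -sech h * I_sq

lemma exists_orbit_ne (hh : 0 < h) : ∃ t₁ t₂, orbit h t₁ ≠ orbit h t₂ := by
  by_contra! hconst
  have hcoeff := firstFourierCoeff_orbit_add hh 0
  have hwave := integral_wave (-1)
  rw [if_neg (by decide)] at hwave
  simp only [fun t ↦ hconst (t + 0) 0, ← wave_neg_one, intervalIntegral.integral_const_mul, hwave,
    ofReal_zero, zero_mul, Complex.exp_zero, mul_zero, mul_one] at hcoeff
  refine mul_ne_zero (ofReal_ne_zero.2 (sech_pos h).ne') (fun hI ↦ ?_) hcoeff.symm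
  simpa using congrArg re hI

end Orbit

section DnMax

variable {h : ℝ}

lemma summable_sech_nat_succ (hh : 0 < h) : Summable fun n : ℕ ↦ sech (2 * (n + 1) * h) := by
  simpa [Function.comp_def] using
    (summable_sech_even hh).comp_injective (Nat.cast_injective.comp Nat.succ_injective)

lemma dnMax_eq_one_add_two_mul_tsum (hh : 0 < h) :
    dnMax h = 1 + 2 * ∑' n : ℕ, sech (2 * (n + 1) * h) := by
  have heven : Function.Even fun n : ℤ ↦ sech (2 * n * h) := fun n ↦ by simp [sech]
  rw [dnMax, tsum_int_eq_zero_add_two_mul_tsum_pnat heven (summable_sech_even hh),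
    tsum_pnat_eq_tsum_succ (f := fun n : ℕ ↦ sech (2 * (n : ℤ) * h))]
  simp [sech]

lemma one_add_two_mul_sum_le_dnMax (hh : 0 < h) (N : ℕ) :
    1 + 2 * ∑ n ∈ Finset.range N, sech (2 * (n + 1) * h) ≤ dnMax h := by
  rw [dnMax_eq_one_add_two_mul_tsum hh]
  gcongr
  exact (summable_sech_nat_succ hh).sum_le_tsum _ fun n _ ↦ (sech_pos _).le

lemma sech_add_nat_mul_le {x y : ℝ} (hx : 0 ≤ x) (hy : 0 ≤ y) (n : ℕ) :
    sech (x + n * y) ≤ sech x * sech y ^ n := by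
  induction n with
  | zero => simp
  | succ n ih =>
    calc sech (x + (n + 1 : ℕ) * y) = sech (x + n * y + y) := by push_cast; ring_nf
      _ ≤ sech (x + n * y) * sech y := sech_add_le_mul (by positivity) hy
      _ ≤ sech x * sech y ^ n * sech y := mul_le_mul_of_nonneg_right ih (sech_pos y).le
      _ = sech x * sech y ^ (n + 1) := by rw [pow_succ, mul_assoc]

lemma dnMax_le_one_add_two_mul_sum_add (hh : 0 < h) (N : ℕ) :
    dnMax h ≤ 1 + 2 * (∑ n ∈ Finset.range N, sech (2 * (n + 1) * h) +
      sech (2 * (N + 1) * h) * (1 - sech (2 * h))⁻¹) := by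
  have hratio : sech (2 * h) < 1 := inv_lt_one_of_one_lt₀ (Real.one_lt_cosh.2 (by positivity))
  have hgeom := (hasSum_geometric_of_lt_one (sech_pos (2 * h)).le hratio).mul_left
    (sech (2 * (N + 1) * h))
  have hterm (n : ℕ) :
      sech (2 * ((n + N : ℕ) + 1) * h) ≤ sech (2 * (N + 1) * h) * sech (2 * h) ^ n := by
    refine le_of_eq_of_le ?_ (sech_add_nat_mul_le (by positivity) (by positivity) n)
    push_cast
    ring_nf
  rw [dnMax_eq_one_add_two_mul_tsum hh, ← (summable_sech_nat_succ hh).sum_add_tsum_nat_add N]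
  gcongr
  exact hasSum_le hterm ((summable_nat_add_iff N).2 (summable_sech_nat_succ hh)).hasSum hgeom

lemma continuousOn_dnMax {a : ℝ} (ha : 0 < a) : ContinuousOn dnMax (Set.Ici a) := by
  refine continuousOn_tsum (u := fun n : ℤ ↦ sech (2 * n * a))
    (fun n ↦ (continuous_sech.comp (continuous_const_mul _)).continuousOn)
    (summable_sech_even ha) fun n x hx ↦ ?_
  rw [Real.norm_eq_abs, abs_sech]
  refine sech_le_sech ?_
  rw [abs_mul, abs_mul _ x]
  gcongr
  exact hx

lemma exists_dnMax_eq_of_arcosh {c₁ c₂ y : ℝ} (hc₁ : 1 < c₁) (hc : c₁ ≤ c₂)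
    (hy₁ : y ≤ dnMax (Real.arcosh c₁)) (hy₂ : dnMax (Real.arcosh c₂) ≤ y) :
    ∃ h, 0 < h ∧ dnMax h = y ∧ Real.cosh h ∈ Set.Icc c₁ c₂ := by
  have hpos := Real.arcosh_pos hc₁
  have hle : Real.arcosh c₁ ≤ Real.arcosh c₂ :=
    (Real.arcosh_le_arcosh (by linarith) (by linarith)).2 hc
  obtain ⟨h, hmem, hh⟩ := intermediate_value_Icc' hle
    ((continuousOn_dnMax hpos).mono Set.Icc_subset_Ici_self) ⟨hy₂, hy₁⟩
  have hh₀ : 0 < h := hpos.trans_le hmem.1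
  refine ⟨h, hh₀, hh, ?_, ?_⟩
  · rw [← Real.cosh_arcosh hc₁.le, Real.cosh_le_cosh, abs_of_pos hpos, abs_of_pos hh₀]
    exact hmem.1
  · rw [← Real.cosh_arcosh (hc₁.le.trans hc), Real.cosh_le_cosh, abs_of_pos hh₀,
      abs_of_pos (hh₀.trans_le hmem.2)]
    exact hmem.2

lemma cosh_two_mul_eq_two_mul_cosh_sq_sub_one (x : ℝ) :
    Real.cosh (2 * x) = 2 * Real.cosh x ^ 2 - 1 := by
  rw [Real.cosh_two_mul, Real.sinh_sq]
  ring

lemma sech_two_mul (x : ℝ) : sech (2 * x) = (2 * Real.cosh x ^ 2 - 1)⁻¹ := by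
  rw [sech, cosh_two_mul_eq_two_mul_cosh_sq_sub_one]

lemma sech_four_mul (x : ℝ) : sech (4 * x) = (2 * (2 * Real.cosh x ^ 2 - 1) ^ 2 - 1)⁻¹ := by
  rw [← cosh_two_mul_eq_two_mul_cosh_sq_sub_one, ← sech_two_mul]
  ring_nf

lemma sech_six_mul (x : ℝ) :
    sech (6 * x) = (4 * (2 * Real.cosh x ^ 2 - 1) ^ 3 - 3 * (2 * Real.cosh x ^ 2 - 1))⁻¹ := by
  rw [← cosh_two_mul_eq_two_mul_cosh_sq_sub_one, ← Real.cosh_three_mul, sech]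
  ring_nf

lemma exists_dnMax_eq :
    ∃ h, 0 < h ∧ dnMax h = 3.2 / π ∧ Real.cosh h ∈ Set.Icc 7.384955 7.384965 := by
  refine exists_dnMax_eq_of_arcosh (by norm_num) (by norm_num) ?_ ?_
  · refine le_trans ?_ (one_add_two_mul_sum_le_dnMax (Real.arcosh_pos (by norm_num)) 3)
    calc 3.2 / π ≤ 3.2 / 3.14159265358979323846 := by gcongr; exact Real.pi_gt_d20.le
      _ ≤ _ := by
        norm_num [Finset.sum_range_succ, sech_two_mul, sech_four_mul, sech_six_mul,
          Real.cosh_arcosh]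
  · refine (dnMax_le_one_add_two_mul_sum_add (Real.arcosh_pos (by norm_num)) 2).trans ?_
    calc _ ≤ 3.2 / 3.14159265358979323847 := by
          norm_num [Finset.sum_range_succ, sech_two_mul, sech_four_mul, sech_six_mul,
            Real.cosh_arcosh]
      _ ≤ 3.2 / π := by gcongr; exact Real.pi_lt_d20.le

end DnMax

section Target

lemma exists_norm_mul_cexp_sub_eq (z w : ℂ) :
    ∃ φ : ℝ, ‖z * cexp (φ * I) - w‖ = |‖z‖ - ‖w‖| := by
  refine ⟨arg w - arg z, ?_⟩
  have hrotate : z * cexp ((arg w - arg z : ℝ) * I) = ‖z‖ * cexp (arg w * I) := by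
    nth_rewrite 1 [← norm_mul_exp_arg_mul_I z]
    rw [mul_assoc, ← Complex.exp_add]
    push_cast
    ring_nf
  have hfactor : z * cexp ((arg w - arg z : ℝ) * I) - w =
      ((‖z‖ - ‖w‖ : ℝ) : ℂ) * cexp (arg w * I) := by
    rw [hrotate, ofReal_sub, sub_mul, norm_mul_exp_arg_mul_I w]
  rw [hfactor, norm_mul, norm_exp_ofReal_mul_I, mul_one, norm_real, Real.norm_eq_abs]

lemma norm_mem_Icc_of_normSq {z : ℂ} {a b : ℝ} (ha : a ^ 2 ≤ normSq z) (hb : normSq z ≤ b ^ 2)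
    (hb₀ : 0 ≤ b) : ‖z‖ ∈ Set.Icc a b := by
  rw [← Complex.sq_norm] at ha hb
  exact ⟨le_of_sq_le_sq ha (norm_nonneg z), le_of_sq_le_sq hb hb₀⟩

lemma abs_norm_sech_mul_sub_norm_le {h : ℝ} (hh : Real.cosh h ∈ Set.Icc 7.384955 7.384965) :
    |‖(sech h * (1 - I) : ℂ)‖ - ‖(-0.1521 - 0.1163508047 * I : ℂ)‖| ≤ 0.0000002438 := by
  have hsech : sech h ∈ Set.Icc (7.384965 : ℝ)⁻¹ 7.384955⁻¹ :=
    ⟨inv_anti₀ (Real.cosh_pos h) hh.2, inv_anti₀ (by norm_num) hh.1⟩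
  have hcoeff : ‖(sech h * (1 - I) : ℂ)‖ ∈ Set.Icc 0.191499 0.1914993 := by
    have hsq : normSq (sech h * (1 - I) : ℂ) = 2 * sech h ^ 2 := by
      rw [normSq_mul, normSq_ofReal]; norm_num [normSq_apply]; ring
    refine norm_mem_Icc_of_normSq ?_ ?_ (by norm_num) <;> rw [hsq]
    · exact le_trans (by norm_num) (mul_le_mul_of_nonneg_left
        (pow_le_pow_left₀ (by norm_num) hsech.1 2) zero_le_two)
    · exact le_trans (mul_le_mul_of_nonneg_left
        (pow_le_pow_left₀ (sech_pos h).le hsech.2 2) zero_le_two) (by norm_num)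
  have htarget : ‖(-0.1521 - 0.1163508047 * I : ℂ)‖ ∈ Set.Icc 0.1914991 0.1914992 :=
    norm_mem_Icc_of_normSq (by norm_num [normSq_apply]) (by norm_num [normSq_apply]) (by norm_num)
  rw [abs_le]
  constructor <;> linarith [hcoeff.1, hcoeff.2, htarget.1, htarget.2]

end Target

/-- main theorem, rescaled form: existence of a nontrivial `2π`-periodic `C¹`
solution of `x'(t) = -(1.6/τ) sin(x(t-τ))` for some `τ` within `10⁻⁶` of `1.570796`, whose
first Fourier coefficient is within `2.438·10⁻⁷` of `-0.1521 - 0.1163508047 i`. -/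
theorem main_periodic_orbit :
    ∃ τ : ℝ, |τ - 1.570796| ≤ 0.000001 ∧
      ∃ x : ℝ → ℝ, ContDiff ℝ 1 x ∧ Function.Periodic x (2 * π) ∧
        (∀ t : ℝ, deriv x t = -(1.6 / τ) * Real.sin (x (t - τ))) ∧
        ‖((1 / (2 * π) : ℝ) : ℂ) *
            (∫ t in (0 : ℝ)..(2 * π), (x t : ℂ) * Complex.exp (-(Complex.I * t))) -
          (-0.1521 - 0.1163508047 * Complex.I)‖ ≤ 0.0000002438 ∧
        ∃ t₁ t₂ : ℝ, x t₁ ≠ x t₂ := by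
  obtain ⟨h, hh, hdnMax, hcosh⟩ := exists_dnMax_eq
  obtain ⟨φ, hφ⟩ := exists_norm_mul_cexp_sub_eq (sech h * (1 - I)) (-0.1521 - 0.1163508047 * I)
  obtain ⟨t₁, t₂, hne⟩ := exists_orbit_ne hh
  refine ⟨π / 2, ?_, fun t ↦ orbit h (t + φ), ?_, ?_, fun t ↦ ?_, ?_, t₁ - φ, t₂ - φ, ?_⟩
  · rw [abs_le]
    constructor <;> linarith [Real.pi_gt_d20, Real.pi_lt_d20]
  · exact (contDiff_orbit hh).comp (contDiff_id.add contDiff_const)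
  · exact (periodic_orbit h).add_const φ
  · have hK : 1.6 / (π / 2) = dnMax h := by rw [hdnMax]; ring
    rw [deriv_comp_add_const, deriv_orbit hh, hK, add_sub_right_comm]
  · rw [firstFourierCoeff_orbit_add hh, hφ]
    exact abs_norm_sech_mul_sub_norm_le hcosh
  · simpa only [sub_add_cancel] using hne
end

section
/- There exists a nonconstant periodic C¹ function y : ℝ → ℝ satisfying y'(t) = -1.6·sin(y(t-1)) for all t ∈ ℝ, with period T = 2π/τ for some real number τ with |τ - 1.570796| ≤ 0.000001. -/
open scoped Real
open Complex Filter

/-!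
Following Kaplan and Yorke, for odd `f` the delay equation `y' = -f (y (t - 1))` has period-`4`
solutions coming from the planar system `x' = -f z`, `z' = f x`: it suffices that the flow rotates
one point by a quarter turn in unit time, since uniqueness then makes the time-one map act on that
orbit as the rotation. For `f = α sin`, the variables `u = (x + z) / 2`, `v = (x - z) / 2` have the
first integral `cos u * cos v`. Its level curve through `(u, v) = (0, β)` is parametrised by an
angle `θ` with `θ' = α √(1 - sin² β sin² θ)`, so a quarter turn takes time `K / α`, where `K` is
the complete elliptic integral of modulus `sin β`. As `K` takes all values in `(π / 2, ∞)`, every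
`α > π / 2` admits `β` with `K = α`.
-/

section KaplanYorke

variable {E : Type*} {f : E → E} {K : NNReal} {x z : ℝ → E} {r : ℝ}

theorem antiperiodic_of_quarter_turn [InvolutiveNeg E]
    (h : ∀ t, x (t + r) = -z t ∧ z (t + r) = x t) : Function.Antiperiodic x (2 * r) := fun t => by
  rw [two_mul, ← add_assoc, (h _).1, (h _).2]

variable [NormedAddCommGroup E]

theorem lipschitzWith_neg_snd_fst (hf : LipschitzWith K f) :
    LipschitzWith K fun w : E × E => (-f w.2, f w.1) := by
  simpa using (hf.comp .prod_snd).neg.prodMk (hf.comp .prod_fst)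

variable [NormedSpace ℝ E]

theorem quarter_turn_of_hasDerivAt (hf : LipschitzWith K f) (hodd : Function.Odd f)
    (hx : ∀ t, HasDerivAt x (-f (z t)) t) (hz : ∀ t, HasDerivAt z (f (x t)) t)
    (hxr : x r = -z 0) (hzr : z r = x 0) (t : ℝ) : x (t + r) = -z t ∧ z (t + r) = x t := by
  have shift_eq_rotation : (fun t => (x (t + r), z (t + r))) = fun t => (-z t, x t) := by
    refine ODE_solution_unique_univ (v := fun _ w => (-f w.2, f w.1)) (s := fun _ => Set.univ)
      (t₀ := 0) (fun _ => (lipschitzWith_neg_snd_fst hf).lipschitzOnWith)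
      (fun t => ⟨?_, trivial⟩) (fun t => ⟨?_, trivial⟩) (by simp [hxr, hzr])
    · exact ((hx _).comp_add_const t r).prodMk ((hz _).comp_add_const t r)
    · simpa [hodd (z t)] using (hz t).neg.prodMk (hx t)
  exact Prod.ext_iff.1 (congrFun shift_eq_rotation t)

theorem hasDerivAt_delay_of_shift_eq (h : ∀ t, z (t + r) = x t)
    (hx : ∀ t, HasDerivAt x (-f (z t)) t) (t : ℝ) : HasDerivAt x (-f (x (t - r))) t := by
  simpa only [← h (t - r), sub_add_cancel] using hx t

theorem contDiff_one_of_hasDerivAt_delay {F : E → E} (hF : Continuous F)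
    (hx : ∀ t, HasDerivAt x (F (x (t - r))) t) : ContDiff ℝ 1 x := by
  have hdiff : Differentiable ℝ x := fun t => (hx t).differentiableAt
  have hcont : Continuous x := hdiff.continuous
  rw [contDiff_one_iff_deriv, funext fun t => (hx t).deriv]
  exact ⟨hdiff, by fun_prop⟩

end KaplanYorke

section ScalarODE

theorem surjective_of_le_deriv {f : ℝ → ℝ} {c : ℝ} (hc : 0 < c) (hf : Differentiable ℝ f)
    (hf' : ∀ x, c ≤ deriv f x) : Function.Surjective f := by
  have growth := mul_sub_le_image_sub_of_le_deriv hf hf'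
  refine hf.continuous.surjective ?_ ?_
  · refine tendsto_atTop_mono' _ ?_
      (tendsto_atTop_add_const_right _ (f 0) (tendsto_id.const_mul_atTop hc))
    filter_upwards [eventually_ge_atTop 0] with x hx
    simpa [le_sub_iff_add_le] using growth hx
  · refine tendsto_atBot_mono' _ ?_
      (tendsto_atBot_add_const_right _ (f 0) (tendsto_id.const_mul_atBot hc))
    filter_upwards [eventually_le_atBot 0] with x hx
    simpa [sub_le_iff_le_add', add_comm (f 0)] using growth hx

/- Separation of variables: the solution is the inverse of the travel time from `0`. -/
theorem exists_hasDerivAt_apply_integral_inv_eq {g : ℝ → ℝ} {C : ℝ} (hg : Continuous g)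
    (hpos : ∀ x, 0 < g x) (hC : ∀ x, g x ≤ C) :
    ∃ θ : ℝ → ℝ, (∀ x, θ (∫ s in 0..x, (g s)⁻¹) = x) ∧ ∀ t, HasDerivAt θ (g (θ t)) t := by
  set travelTime : ℝ → ℝ := fun x => ∫ s in 0..x, (g s)⁻¹
  have hderiv (x : ℝ) : HasDerivAt travelTime (g x)⁻¹ x :=
    ((hg.inv₀ fun s => (hpos s).ne').integral_hasStrictDerivAt 0 x).hasDerivAt
  have hmono : StrictMono travelTime :=
    strictMono_of_hasDerivAt_pos hderiv fun x => inv_pos.2 (hpos x)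
  have hsurj : Function.Surjective travelTime :=
    surjective_of_le_deriv (inv_pos.2 ((hpos 0).trans_le (hC 0)))
      (fun x => (hderiv x).differentiableAt)
      fun x => (hderiv x).deriv ▸ inv_anti₀ (hpos x) (hC x)
  let e := hmono.orderIsoOfSurjective travelTime hsurj
  refine ⟨e.symm, e.symm_apply_apply, fun t => ?_⟩
  simpa using (hderiv (e.symm t)).of_local_left_inverse e.symm.continuous.continuousAt
    (inv_pos.2 (hpos _)).ne' (.of_forall e.apply_symm_apply)

end ScalarODE

section EllipticIntegral

/-- Jacobi's delta amplitude `√(1 - k² sin² φ)`, as a function of the complementary modulus `p`,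
`p² = 1 - k²`, rather than of `k`. -/
noncomputable def deltaAmplitude (p φ : ℝ) : ℝ :=
  √(Real.cos φ ^ 2 + p ^ 2 * Real.sin φ ^ 2)

/-- The complete elliptic integral of the first kind, as a function of the complementary
modulus `p`. -/
noncomputable def completeEllipticIntegral (p : ℝ) : ℝ :=
  ∫ φ in 0..π / 2, (deltaAmplitude p φ)⁻¹

variable {p : ℝ}

theorem continuous_uncurry_deltaAmplitude : Continuous (Function.uncurry deltaAmplitude) := by
  unfold deltaAmplitude Function.uncurry
  fun_prop

theorem continuous_deltaAmplitude (p : ℝ) : Continuous (deltaAmplitude p) := by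
  unfold deltaAmplitude
  fun_prop

theorem deltaAmplitude_sq (p φ : ℝ) :
    deltaAmplitude p φ ^ 2 = Real.cos φ ^ 2 + p ^ 2 * Real.sin φ ^ 2 :=
  Real.sq_sqrt (by positivity)

theorem deltaAmplitude_nonneg (p φ : ℝ) : 0 ≤ deltaAmplitude p φ := Real.sqrt_nonneg _

theorem deltaAmplitude_pos (hp : p ≠ 0) (φ : ℝ) : 0 < deltaAmplitude p φ := by
  refine Real.sqrt_pos.2 ?_
  obtain hcos | hcos := eq_or_ne (Real.cos φ) 0
  · have hsin : Real.sin φ ^ 2 = 1 := by simp [Real.sin_sq, hcos]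
    rw [hcos, hsin]
    positivity
  · positivity

theorem deltaAmplitude_le_one (hp : p ^ 2 ≤ 1) (φ : ℝ) : deltaAmplitude p φ ≤ 1 := by
  refine Real.sqrt_le_one.2 ?_
  nlinarith [Real.sin_sq_add_cos_sq φ, sq_nonneg (Real.sin φ)]

theorem continuous_inv_deltaAmplitude (hp : p ≠ 0) : Continuous fun φ => (deltaAmplitude p φ)⁻¹ :=
  (continuous_deltaAmplitude p).inv₀ fun φ => (deltaAmplitude_pos hp φ).ne'

theorem deltaAmplitude_le_add_sub (hp : 0 ≤ p) {φ : ℝ} (hφ : φ ≤ π / 2) :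
    deltaAmplitude p φ ≤ π / 2 + p - φ := by
  have hcos : Real.cos φ ^ 2 ≤ (π / 2 - φ) ^ 2 := by
    rw [← Real.sin_pi_div_two_sub]
    exact sq_le_sq.2 Real.abs_sin_le_abs
  refine Real.sqrt_le_iff.2 ⟨by linarith, ?_⟩
  nlinarith [Real.sin_sq_le_one φ, mul_nonneg (sub_nonneg.2 hφ) hp]

theorem completeEllipticIntegral_one : completeEllipticIntegral 1 = π / 2 := by
  simp [completeEllipticIntegral, deltaAmplitude]

theorem neg_log_le_completeEllipticIntegral (hp : 0 < p) :
    -Real.log p ≤ completeEllipticIntegral p := by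
  have hpi : 0 ≤ π / 2 := by positivity
  have hne (φ : ℝ) (hφ : φ ∈ Set.uIcc 0 (π / 2)) : π / 2 + p - φ ≠ 0 := by
    rw [Set.uIcc_of_le hpi] at hφ
    linarith [hφ.2]
  have integral_majorant :
      ∫ φ in 0..π / 2, (π / 2 + p - φ)⁻¹ = Real.log (π / 2 + p) - Real.log p := by
    rw [intervalIntegral.integral_comp_sub_left fun ψ => ψ⁻¹]
    simp only [add_sub_cancel_left, sub_zero]
    rw [integral_inv_of_pos hp (by positivity), Real.log_div (by positivity) hp.ne']
  calc -Real.log p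
      ≤ Real.log (π / 2 + p) - Real.log p := by
        linarith [Real.log_nonneg (by linarith [Real.pi_gt_three] : 1 ≤ π / 2 + p)]
    _ = ∫ φ in 0..π / 2, (π / 2 + p - φ)⁻¹ := integral_majorant.symm
    _ ≤ completeEllipticIntegral p := by
        refine intervalIntegral.integral_mono_on hpi ?_
          ((continuous_inv_deltaAmplitude hp.ne').intervalIntegrable _ _) fun φ hφ =>
            inv_anti₀ (deltaAmplitude_pos hp.ne' φ) (deltaAmplitude_le_add_sub hp.le hφ.2)
        exact ContinuousOn.intervalIntegrable (.inv₀ (by fun_prop) hne)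

theorem continuous_completeEllipticIntegral_exp_neg :
    Continuous fun s : ℝ => completeEllipticIntegral (Real.exp (-s)) := by
  refine intervalIntegral.continuous_parametric_intervalIntegral_of_continuous' ?_ _ _
  refine Continuous.inv₀ ?_ fun w => (deltaAmplitude_pos (Real.exp_pos _).ne' _).ne'
  exact continuous_uncurry_deltaAmplitude.comp
    (f := fun w : ℝ × ℝ => (Real.exp (-w.1), w.2)) (by fun_prop)

theorem exists_completeEllipticIntegral_eq {α : ℝ} (hα : π / 2 < α) :
    ∃ p ∈ Set.Ioo 0 1, completeEllipticIntegral p = α := by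
  have hα0 : 0 ≤ α := by linarith [Real.pi_pos]
  have hα_mem : α ∈ Set.Icc (completeEllipticIntegral (Real.exp (-0)))
      (completeEllipticIntegral (Real.exp (-α))) := by
    constructor
    · simpa [completeEllipticIntegral_one] using hα.le
    · simpa using neg_log_le_completeEllipticIntegral (Real.exp_pos (-α))
  obtain ⟨s, hs, hKs⟩ := intermediate_value_Icc hα0
    continuous_completeEllipticIntegral_exp_neg.continuousOn hα_mem
  have hs0 : s ≠ 0 := by
    rintro rfl
    simp [completeEllipticIntegral_one, hα.ne] at hKs
  exact ⟨_, ⟨Real.exp_pos _, by simpa using hs.1.lt_of_ne' hs0⟩, hKs⟩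

end EllipticIntegral

section LevelCurve

/-- First coordinate of the point at angle `φ` on the curve `cos u * cos v = cos β`, the orbit
through `(u, v) = (0, β)` of `u' = cos u * sin v`, `v' = -sin u * cos v`. The angle is chosen so
that `cos u` is the delta amplitude `deltaAmplitude (cos β) φ`. -/
noncomputable def levelCurveFst (β φ : ℝ) : ℝ := Real.arcsin (Real.sin β * Real.sin φ)

/-- Second coordinate of the point at angle `φ` on the curve `cos u * cos v = cos β`; see
`levelCurveFst`. -/
noncomputable def levelCurveSnd (β φ : ℝ) : ℝ := Real.arctan (Real.tan β * Real.cos φ)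

variable {β : ℝ}

theorem deltaAmplitude_cos_sq (β φ : ℝ) :
    deltaAmplitude (Real.cos β) φ ^ 2 = 1 - (Real.sin β * Real.sin φ) ^ 2 := by
  rw [deltaAmplitude_sq, Real.cos_sq', Real.cos_sq']
  ring

theorem sin_levelCurveFst (β φ : ℝ) :
    Real.sin (levelCurveFst β φ) = Real.sin β * Real.sin φ := by
  have h : |Real.sin β * Real.sin φ| ≤ 1 := by
    rw [← sq_le_one_iff_abs_le_one]
    linarith [deltaAmplitude_cos_sq β φ, sq_nonneg (deltaAmplitude (Real.cos β) φ)]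
  exact Real.sin_arcsin (abs_le.1 h).1 (abs_le.1 h).2

theorem cos_levelCurveFst (β φ : ℝ) :
    Real.cos (levelCurveFst β φ) = deltaAmplitude (Real.cos β) φ := by
  rw [levelCurveFst, Real.cos_arcsin, ← deltaAmplitude_cos_sq,
    Real.sqrt_sq (deltaAmplitude_nonneg _ _)]

theorem one_add_tan_mul_cos_sq (hβ : Real.cos β ≠ 0) (φ : ℝ) :
    1 + (Real.tan β * Real.cos φ) ^ 2 = (deltaAmplitude (Real.cos β) φ / Real.cos β) ^ 2 := by
  rw [div_pow, deltaAmplitude_sq, Real.tan_eq_sin_div_cos]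
  field_simp
  rw [Real.sin_sq, Real.sin_sq]
  ring

theorem cos_levelCurveSnd (hβ : 0 < Real.cos β) (φ : ℝ) :
    Real.cos (levelCurveSnd β φ) = Real.cos β / deltaAmplitude (Real.cos β) φ := by
  rw [levelCurveSnd, Real.cos_arctan, one_add_tan_mul_cos_sq hβ.ne',
    Real.sqrt_sq (div_pos (deltaAmplitude_pos hβ.ne' φ) hβ).le, one_div_div]

theorem sin_levelCurveSnd (hβ : 0 < Real.cos β) (φ : ℝ) :
    Real.sin (levelCurveSnd β φ) = Real.sin β * Real.cos φ / deltaAmplitude (Real.cos β) φ := by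
  have hcos : Real.cos (levelCurveSnd β φ) ≠ 0 := (Real.cos_arctan_pos _).ne'
  rw [← Real.tan_mul_cos hcos, cos_levelCurveSnd hβ, levelCurveSnd, Real.tan_arctan,
    Real.tan_eq_sin_div_cos]
  field_simp

variable {α t : ℝ} {θ : ℝ → ℝ}

theorem hasDerivAt_levelCurveFst (hβ : 0 < Real.cos β)
    (hθ : HasDerivAt θ (α * deltaAmplitude (Real.cos β) (θ t)) t) :
    HasDerivAt (fun t => levelCurveFst β (θ t))
      (α * (Real.cos (levelCurveFst β (θ t)) * Real.sin (levelCurveSnd β (θ t)))) t := by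
  have hΔ := deltaAmplitude_pos hβ.ne' (θ t)
  have hlt : |Real.sin β * Real.sin (θ t)| < 1 := by
    rw [← sq_lt_one_iff_abs_lt_one]
    linarith [deltaAmplitude_cos_sq β (θ t), pow_pos hΔ 2]
  obtain ⟨hgt_neg_one, hlt_one⟩ := abs_lt.1 hlt
  refine ((Real.hasDerivAt_arcsin hgt_neg_one.ne' hlt_one.ne).comp t
    (hθ.sin.const_mul (Real.sin β))).congr_deriv ?_
  rw [← Real.cos_arcsin, ← levelCurveFst, cos_levelCurveFst, sin_levelCurveSnd hβ]
  field_simp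

theorem hasDerivAt_levelCurveSnd (hβ : 0 < Real.cos β)
    (hθ : HasDerivAt θ (α * deltaAmplitude (Real.cos β) (θ t)) t) :
    HasDerivAt (fun t => levelCurveSnd β (θ t))
      (-(α * (Real.sin (levelCurveFst β (θ t)) * Real.cos (levelCurveSnd β (θ t))))) t := by
  have hΔ := deltaAmplitude_pos hβ.ne' (θ t)
  refine (hθ.cos.const_mul (Real.tan β)).arctan.congr_deriv ?_
  rw [one_add_tan_mul_cos_sq hβ.ne', sin_levelCurveFst, cos_levelCurveSnd hβ,
    Real.tan_eq_sin_div_cos]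
  field_simp

end LevelCurve

section Sine

variable {α : ℝ}

theorem exists_angle_quarter_turn_unit_time (hα : π / 2 < α) :
    ∃ β ∈ Set.Ioo 0 (π / 2), ∃ θ : ℝ → ℝ, θ 0 = 0 ∧ θ 1 = π / 2 ∧
      ∀ t, HasDerivAt θ (α * deltaAmplitude (Real.cos β) (θ t)) t := by
  obtain ⟨p, ⟨hp0, hp1⟩, hK⟩ := exists_completeEllipticIntegral_eq hα
  have hα0 : 0 < α := by linarith [Real.pi_pos]
  obtain ⟨θ, hθ_travel, hθ⟩ := exists_hasDerivAt_apply_integral_inv_eq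
    ((continuous_deltaAmplitude p).const_mul α)
    (fun φ => mul_pos hα0 (deltaAmplitude_pos hp0.ne' φ))
    (fun φ => mul_le_mul_of_nonneg_left (deltaAmplitude_le_one (pow_le_one₀ hp0.le hp1.le) φ)
      hα0.le)
  have quarter_time : ∫ φ in 0..π / 2, (α * deltaAmplitude p φ)⁻¹ = 1 := by
    simp only [mul_inv, intervalIntegral.integral_const_mul]
    rw [← completeEllipticIntegral, hK, inv_mul_cancel₀ hα0.ne']
  refine ⟨Real.arccos p, ⟨Real.arccos_pos.2 hp1, Real.arccos_lt_pi_div_two.2 hp0⟩, θ, ?_, ?_, ?_⟩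
  · simpa using hθ_travel 0
  · simpa only [quarter_time] using hθ_travel (π / 2)
  · rwa [Real.cos_arccos (by linarith) hp1.le]

theorem exists_sin_planar_solution_quarter_turn (hα : π / 2 < α) :
    ∃ x z : ℝ → ℝ, 0 < x 0 ∧ x 1 = -z 0 ∧ z 1 = x 0 ∧
      (∀ t, HasDerivAt x (-(α * Real.sin (z t))) t) ∧
      ∀ t, HasDerivAt z (α * Real.sin (x t)) t := by
  obtain ⟨β, ⟨hβ0, hβ1⟩, θ, hθ0, hθ1, hθ⟩ := exists_angle_quarter_turn_unit_time hα
  have hβ : 0 < Real.cos β := Real.cos_pos_of_mem_Ioo ⟨by linarith, hβ1⟩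
  have hu t := hasDerivAt_levelCurveFst hβ (hθ t)
  have hv t := hasDerivAt_levelCurveSnd hβ (hθ t)
  have hfst_zero : levelCurveFst β 0 = 0 := by simp [levelCurveFst]
  have hsnd_zero : levelCurveSnd β 0 = β := by
    simp [levelCurveSnd, Real.arctan_tan (by linarith) hβ1]
  have hfst_quarter : levelCurveFst β (π / 2) = β := by
    simp [levelCurveFst, Real.arcsin_sin (by linarith) hβ1.le]
  have hsnd_quarter : levelCurveSnd β (π / 2) = 0 := by simp [levelCurveSnd]
  refine ⟨fun t => levelCurveFst β (θ t) + levelCurveSnd β (θ t),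
    fun t => levelCurveFst β (θ t) - levelCurveSnd β (θ t), ?_, ?_, ?_, fun t => ?_, fun t => ?_⟩
  · simpa [hθ0, hfst_zero, hsnd_zero] using hβ0
  · simp [hθ0, hθ1, hfst_zero, hsnd_zero, hfst_quarter, hsnd_quarter]
  · simp [hθ0, hθ1, hfst_zero, hsnd_zero, hfst_quarter, hsnd_quarter]
  · refine ((hu t).add (hv t)).congr_deriv ?_
    rw [Real.sin_sub]
    ring
  · refine ((hu t).sub (hv t)).congr_deriv ?_
    rw [Real.sin_add]
    ring

theorem lipschitzWith_const_mul_sin (α : ℝ) : LipschitzWith ‖α‖₊ fun x => α * Real.sin x := by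
  simpa [Function.comp_def] using (lipschitzWith_smul α).comp Real.lipschitzWith_sin

end Sine

theorem main_periodic_orbit_original_general {α : ℝ} (hα : π / 2 < α) :
    ∃ y : ℝ → ℝ, ContDiff ℝ 1 y ∧ Function.Periodic y 4 ∧
      (∀ t : ℝ, deriv y t = -α * Real.sin (y (t - 1))) ∧ ∃ t₁ t₂ : ℝ, y t₁ ≠ y t₂ := by
  obtain ⟨y, z, hy0, hy1, hz1, hy, hz⟩ := exists_sin_planar_solution_quarter_turn hα
  have hturn := quarter_turn_of_hasDerivAt (lipschitzWith_const_mul_sin α) (fun x => by simp)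
    hy hz hy1 hz1
  have hanti := antiperiodic_of_quarter_turn hturn
  have hdelay := hasDerivAt_delay_of_shift_eq (f := fun w => α * Real.sin w)
    (fun t => (hturn t).2) hy
  have hsmooth := contDiff_one_of_hasDerivAt_delay (F := fun w => -(α * Real.sin w))
    (by fun_prop) hdelay
  refine ⟨y, hsmooth, ?_, fun t => ?_, 2, 0, ?_⟩
  · have hperiodic : Function.Periodic y (2 * (2 * 1)) := hanti.periodic_two_mul
    norm_num at hperiodic
    exact hperiodic
  · rw [(hdelay t).deriv, neg_mul]
  · have hy2 : y 2 = -y 0 := by simpa using hanti 0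
    exact (by linarith : y 2 < y 0).ne

/-- main theorem, original equation: a nonconstant periodic `C¹` solution of
`y'(t) = -1.6 sin(y(t-1))` with period `2π/τ`, `|τ - 1.570796| ≤ 10⁻⁶`. -/
theorem main_periodic_orbit_original :
    ∃ τ : ℝ, |τ - 1.570796| ≤ 0.000001 ∧
      ∃ y : ℝ → ℝ, ContDiff ℝ 1 y ∧ Function.Periodic y (2 * π / τ) ∧
        (∀ t : ℝ, deriv y t = -1.6 * Real.sin (y (t - 1))) ∧
        ∃ t₁ t₂ : ℝ, y t₁ ≠ y t₂ := by
  obtain ⟨y, hy, hperiodic, hdelay, hnonconst⟩ :=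
    main_periodic_orbit_original_general (α := 1.6) (by linarith [Real.pi_lt_d6])
  have hperiod : 2 * π / (π / 2) = 4 := by field_simp; norm_num
  refine ⟨π / 2, abs_le.2 ?_, y, hy, hperiod ▸ hperiodic, hdelay, hnonconst⟩
  constructor <;> linarith [Real.pi_gt_d6, Real.pi_lt_d6]
end
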